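/- Let τ = (1 + √5)/2 and let P_d = {x ∈ ℝ³ : |τx₁| + |x₂| ≤ 1, |τx₂| + |x₃| ≤ 1, |τx₃| + |x₁| ≤ 1} be the regular dodecahedron. Then the lattice packing density of P_d equals δ*(P_d) = (2 + τ)/4, and the lattice 2D₃ is a densest packing lattice of the scaled copy (1 + τ)·P_d, where D₃ is the lattice with basis (1,1,0), (1,0,1), (0,1,1). -/

import Mathlib

/-!
The facet normals of the dodecahedron are the vertices `ico f` of an icosahedron, so `body ρ`, the
dodecahedron scaled by `ρ`, is cut out by `dot (ico f) x ≤ ρ`. A lattice packs `body ρ` exactly when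
every nonzero lattice vector `v` satisfies `2 * ρ ≤ dot (ico f) v` for some `f`
(`admissible_of_packing`, `packing_of_admissible`). With `ρ = 1 + τ` the lattice `2D₃`, of
determinant `16`, has this property (`fcc_admissible`), and the body has volume `4 * (2 + τ)`
(`volume_body`): it is a cube of side `2` with a roof on each face. It remains to see that every
such admissible lattice has determinant at least `16` (`det_bound`).

By Selling's reduction, the lattice has an obtuse superbase `v0 + v1 + v2 + v3 = 0`, `vᵢ·vⱼ ≤ 0`,
and the squared determinant is a polynomial in the six Selling parameters `-vᵢ·vⱼ`. Each of the
vectors `vᵢ`, `vᵢ + vⱼ` is nonzero and so lies beyond some facet. This bounds its norm from below,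
and it bounds the sum of squared norms of each triangle such as `v0, v2, -(v0 + v2)` from below by a
quantity depending on the position of the three facets (`triple_bound`): the sum is at least `29`,
unless the three facet normals have pairwise inner product `-τ`, when it is still at least `23.56`.
If one of the four triangles that avoid the matching `{01|23}` of least weight reaches `29`, or if
the superbase is long, explicit polynomial certificates (`gram_bound`, `gram_bound2`) give the
bound. Otherwise all four triangles are in the exceptional position, and a finite check on the
icosahedron (`combi`) determines the configuration of the six facets up to a symmetry. These are
the facets touched by the fcc superbase. In the orthonormal frame given by that configuration, six
linear inequalities say that the lattice vectors lie beyond their facets, and the determinant is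
bounded by its value at `2D₃` by a local argument (`d3_ineq`): the linear inequalities force the
trace up, and the second-order terms have the right sign on the remaining directions.
-/

open MeasureTheory Pointwise

/-- The lattice `Bℤ³`. -/
def latticeOf (B : Matrix (Fin 3) (Fin 3) ℝ) : Set (Fin 3 → ℝ) :=
  {x | ∃ z : Fin 3 → ℤ, x = B.mulVec fun i => (z i : ℝ)}

/-- `Λ` is a packing lattice for `K`. -/
def IsPackingLattice (K Λ : Set (Fin 3 → ℝ)) : Prop :=
  ∀ x ∈ Λ, ∀ y ∈ Λ, x ≠ y →
    Disjoint (interior ((x + ·) '' K)) (interior ((y + ·) '' K))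

/-- The lattice packing density `δ*(K)`. -/
noncomputable def packDensity (K : Set (Fin 3 → ℝ)) : ℝ :=
  sSup {r | ∃ B : Matrix (Fin 3) (Fin 3) ℝ, IsUnit B.det ∧
    IsPackingLattice K (latticeOf B) ∧ r = (volume K).toReal / |B.det|}

/-- The golden ratio. -/
noncomputable def τ : ℝ := (1 + Real.sqrt 5) / 2

/-- The regular dodecahedron. -/
noncomputable def dodeca : Set (Fin 3 → ℝ) :=
  {x | |τ * x 0| + |x 1| ≤ 1 ∧ |τ * x 1| + |x 2| ≤ 1 ∧ |τ * x 2| + |x 0| ≤ 1}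

/-- The fcc lattice basis matrix `D₃` with columns `(1,1,0), (1,0,1), (0,1,1)`. -/
def D3 : Matrix (Fin 3) (Fin 3) ℝ :=
  (Matrix.of ![![1,1,0], ![1,0,1], ![0,1,1]]).transpose

/-! ### Scalar inequalities -/

lemma tau_sq : τ * τ = τ + 1 := by
  have h := Real.mul_self_sqrt (show (0 : ℝ) ≤ 5 by norm_num)
  unfold τ
  linear_combination h / 4

lemma tau_gt : 1.618 < τ := by
  have h : (2.236 : ℝ) < Real.sqrt 5 := Real.lt_sqrt_of_sq_lt (by norm_num)
  unfold τ
  linarith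

lemma tau_lt : τ < 1.6181 := by
  have h : Real.sqrt 5 < 2.2362 := (Real.sqrt_lt' (by norm_num)).2 (by norm_num)
  unfold τ
  linarith

/-- Each mixed product `-d * A * A'` in the expansion of the determinant is bounded below by a
definite quadratic term minus an error governed by `k`. When `k = 0` this reads `A' = -τ A`, so
that `-A * A' = τ A²` is positive. -/
lemma cross_term (d k A A' : ℝ) (h1 : 0.89 ≤ d) (h2 : d ≤ 1.17) (hk : |τ * A + A'| ≤ k) :
    0.1 * (A ^ 2 + A' ^ 2) - 0.24 * k ^ 2 ≤ -(d * (A * A')) := by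
  obtain ⟨s, hs⟩ : ∃ s, s = τ * A + A' := ⟨_, rfl⟩
  have hA' : A' = s - τ * A := by linarith
  rw [← hs] at hk
  have hsk : s ^ 2 ≤ k ^ 2 := sq_le_sq' (by linarith [neg_le_of_abs_le hk]) (le_of_abs_le hk)
  have e : A ^ 2 + A' ^ 2 = (τ + 2) * A ^ 2 - 2 * (τ * (s * A)) + s ^ 2 := by
    rw [hA']; linear_combination A ^ 2 * tau_sq
  have e2 : A * A' = s * A - τ * A ^ 2 := by rw [hA']; ring
  have t1 := tau_gt
  have t2 := tau_lt
  have q : 0.12 * (A ^ 2 + A' ^ 2) - 0.2 * k ^ 2 ≤ -(A * A') := by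
    rw [e, e2]
    have h0 : 0 ≤ (0.88 * τ - 0.24 - 1.18) * A ^ 2 := mul_nonneg (by linarith) (sq_nonneg _)
    nlinarith [sq_nonneg (A - 0.26 * s), sq_nonneg (A + s), sq_nonneg (A - s),
      mul_nonneg (sub_nonneg.2 t1.le) (sq_nonneg (A + s)),
      mul_nonneg (sub_nonneg.2 t2.le) (sq_nonneg (A + s)),
      mul_nonneg (sub_nonneg.2 t1.le) (sq_nonneg (A - s)),
      mul_nonneg (sub_nonneg.2 t2.le) (sq_nonneg (A - s))]
  have h3 := mul_nonneg (show 0 ≤ d by linarith) (sub_nonneg.2 q)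
  have h4 := mul_nonneg (sub_nonneg.2 h1) (add_nonneg (sq_nonneg A) (sq_nonneg A'))
  have h5 := mul_nonneg (sub_nonneg.2 h2) (sq_nonneg k)
  nlinarith [sq_nonneg A, sq_nonneg A', sq_nonneg k]

/-- Cauchy–Schwarz and the inequality of arithmetic and geometric means bound the cubic terms by
a small multiple of the sum of squares `Y`. -/
lemma cubic_term (A A' B B' C C' Y : ℝ)
    (hY : Y = A ^ 2 + A' ^ 2 + (B ^ 2 + B' ^ 2) + (C ^ 2 + C' ^ 2)) (hY' : Y ≤ 0.25) :
    -(0.1 * Y) ≤ A * B * C + A' * B' * C' := by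
  obtain ⟨x, hx⟩ : ∃ x, x = A ^ 2 + A' ^ 2 := ⟨_, rfl⟩
  obtain ⟨y, hy⟩ : ∃ x, x = B ^ 2 + B' ^ 2 := ⟨_, rfl⟩
  obtain ⟨z, hz⟩ : ∃ x, x = C ^ 2 + C' ^ 2 := ⟨_, rfl⟩
  have x0 : 0 ≤ x := by rw [hx]; positivity
  have y0 : 0 ≤ y := by rw [hy]; positivity
  have z0 : 0 ≤ z := by rw [hz]; positivity
  have e : Y = x + y + z := by rw [hY, hx, hy, hz]
  have Y0 : 0 ≤ Y := by rw [e]; positivity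
  have h1 : (A * B * C + A' * B' * C') ^ 2 ≤ x * y * z := by
    rw [hx, hy, hz]
    nlinarith [sq_nonneg (A * B' * C'), sq_nonneg (A' * B * C), sq_nonneg (A * B * C'),
      sq_nonneg (A * B' * C), sq_nonneg (A' * B' * C), sq_nonneg (A' * B * C'),
      sq_nonneg (A * (B * C') - A' * (B' * C)), sq_nonneg (A * B' * C - A' * B * C'),
      sq_nonneg (A * B' * C' - A' * B * C)]
  have h2 : 27 * (x * y * z) ≤ Y ^ 3 := by
    rw [e]
    nlinarith [mul_nonneg x0 (sq_nonneg (y - z)), mul_nonneg y0 (sq_nonneg (x - z)),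
      mul_nonneg z0 (sq_nonneg (y - x)),
      mul_nonneg (add_nonneg (add_nonneg x0 y0) z0) (sq_nonneg (y - z)),
      mul_nonneg (add_nonneg (add_nonneg x0 y0) z0) (sq_nonneg (x - z)),
      mul_nonneg (add_nonneg (add_nonneg x0 y0) z0) (sq_nonneg (x - y))]
  have h3 : (A * B * C + A' * B' * C') ^ 2 ≤ (0.1 * Y) ^ 2 := by
    nlinarith [mul_nonneg (sub_nonneg.2 hY') (sq_nonneg Y), sq_nonneg Y]
  exact (abs_le_of_sq_le_sq' h3 (by positivity)).1

/-- The product of the diagonal entries exceeds `1` by at least `0.4 * t`, where `3 + t` is the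
trace. -/
lemma diag_term (d1 d2 d3 t : ℝ) (ht : t = d1 + d2 + d3 - 3) (ht0 : 0 ≤ t) (ht1 : t ≤ 0.125)
    (l1 : -(0.82 * t) ≤ d1 - 1) (u1 : d1 - 1 ≤ 1.31 * t)
    (l2 : -(0.82 * t) ≤ d2 - 1) (u2 : d2 - 1 ≤ 1.31 * t)
    (l3 : -(0.82 * t) ≤ d3 - 1) (u3 : d3 - 1 ≤ 1.31 * t) :
    1 + 0.4 * t ≤ d1 * d2 * d3 := by
  obtain ⟨x, hx⟩ : ∃ x, x = d1 - 1 := ⟨_, rfl⟩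
  obtain ⟨y, hy⟩ : ∃ x, x = d2 - 1 := ⟨_, rfl⟩
  obtain ⟨z, hz⟩ : ∃ x, x = d3 - 1 := ⟨_, rfl⟩
  rw [← hx] at l1 u1
  rw [← hy] at l2 u2
  rw [← hz] at l3 u3
  have ex : t = x + y + z := by rw [hx, hy, hz, ht]; ring
  have e : d1 * d2 * d3 = 1 + t + (x * y + y * z + z * x) + x * y * z := by
    rw [ex, hx, hy, hz]; ring
  have q1 : x ^ 2 ≤ (1.31 * t) ^ 2 := sq_le_sq' (by linarith) u1
  have q2 : y ^ 2 ≤ (1.31 * t) ^ 2 := sq_le_sq' (by linarith) u2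
  have q3 : z ^ 2 ≤ (1.31 * t) ^ 2 := sq_le_sq' (by linarith) u3
  have q4 : t ^ 2 ≤ 0.125 * t := by nlinarith
  have q5 : -(0.36 * t ^ 2) ≤ x * y * z := by
    have hxy : |x * y| ≤ 1.8 * t ^ 2 := by
      rw [abs_le]; constructor <;> nlinarith [sq_nonneg (x + y), sq_nonneg (x - y)]
    have hz' : |z| ≤ 0.2 := by rw [abs_le]; constructor <;> linarith
    have := mul_le_mul hxy hz' (abs_nonneg _) (by positivity)
    rw [← abs_mul] at this
    linarith [neg_le_of_abs_le this]
  have q6 : t ^ 2 = x ^ 2 + y ^ 2 + z ^ 2 + 2 * (x * y + y * z + z * x) := by rw [ex]; ring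
  rw [e]
  nlinarith

/-- Local optimality of `2D₃`. In an orthonormal frame adapted to six dodecahedron facets, the
matrix of a lattice basis has diagonal `d1, d2, d3` and off-diagonal pairs `(A, A')`, `(B, B')`,
`(C, C')`; the hypotheses express that six lattice vectors lie beyond these six facets and that the
matrix is not too large. Its determinant is then at least `1`, the value at the identity matrix. -/
lemma d3_ineq (d1 d2 d3 A A' B B' C C' : ℝ)
    (h1 : τ ^ 2 + |τ * A + A'| ≤ τ * d1 + d2)
    (h2 : τ ^ 2 + |τ * B + B'| ≤ τ * d2 + d3)
    (h3 : τ ^ 2 + |τ * C + C'| ≤ τ * d3 + d1)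
    (hF : d1 ^ 2 + d2 ^ 2 + d3 ^ 2 + A ^ 2 + A' ^ 2 + B ^ 2 + B' ^ 2 + C ^ 2 + C' ^ 2 ≤ 3.25) :
    1 ≤ d1 * d2 * d3 + A * B * C + A' * B' * C' - d1 * (B * B') - d2 * (C * C')
      - d3 * (A * A') := by
  have t1 := tau_gt
  have t2 := tau_lt
  have ts := tau_sq
  obtain ⟨k1, hk1⟩ : ∃ k, k = τ * d1 + d2 - τ ^ 2 := ⟨_, rfl⟩
  obtain ⟨k2, hk2⟩ : ∃ k, k = τ * d2 + d3 - τ ^ 2 := ⟨_, rfl⟩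
  obtain ⟨k3, hk3⟩ : ∃ k, k = τ * d3 + d1 - τ ^ 2 := ⟨_, rfl⟩
  have a1 : |τ * A + A'| ≤ k1 := by linarith
  have a2 : |τ * B + B'| ≤ k2 := by linarith
  have a3 : |τ * C + C'| ≤ k3 := by linarith
  have p1 : 0 ≤ k1 := (abs_nonneg _).trans a1
  have p2 : 0 ≤ k2 := (abs_nonneg _).trans a2
  have p3 : 0 ≤ k3 := (abs_nonneg _).trans a3
  obtain ⟨t, ht⟩ : ∃ t, t = d1 + d2 + d3 - 3 := ⟨_, rfl⟩
  have hst : (τ + 1) * t = k1 + k2 + k3 := by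
    rw [hk1, hk2, hk3, ht]; linear_combination 3 * ts
  have ht0 : 0 ≤ t := by
    by_contra hneg
    have := mul_pos (show 0 < τ + 1 by linarith) (neg_pos.2 (not_le.1 hneg))
    linarith
  have ht1 : t ≤ 0.125 := by
    linarith only [hF, ht, sq_nonneg (d1 - 1), sq_nonneg (d2 - 1), sq_nonneg (d3 - 1), sq_nonneg A,
      sq_nonneg A', sq_nonneg B, sq_nonneg B', sq_nonneg C, sq_nonneg C']
  have hsum : k1 + k2 + k3 ≤ 2.62 * t := by
    linarith only [hst, t2, ht0, mul_nonneg (sub_nonneg.2 t2.le) ht0]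
  -- the inverse of the circulant system `kᵢ = τ (dᵢ - 1) + (dᵢ₊₁ - 1)`
  have e1 : 2 * (d1 - 1) = k1 - (τ - 1) * k2 + (2 - τ) * k3 := by
    rw [hk1, hk2, hk3]; linear_combination (d2 + d3 - 2 * τ + 2) * ts
  have e2 : 2 * (d2 - 1) = k2 - (τ - 1) * k3 + (2 - τ) * k1 := by
    rw [hk1, hk2, hk3]; linear_combination (d3 + d1 - 2 * τ + 2) * ts
  have e3 : 2 * (d3 - 1) = k3 - (τ - 1) * k1 + (2 - τ) * k2 := by
    rw [hk1, hk2, hk3]; linear_combination (d1 + d2 - 2 * τ + 2) * ts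
  have bound : ∀ x y z d : ℝ, 0 ≤ x → 0 ≤ y → 0 ≤ z → x + y + z ≤ 2.62 * t →
      2 * (d - 1) = x - (τ - 1) * y + (2 - τ) * z → -(0.82 * t) ≤ d - 1 ∧ d - 1 ≤ 1.31 * t := by
    intro x y z d hx hy hz hs hd
    have m1 := mul_nonneg (sub_nonneg.2 t1.le) hy
    have m2 := mul_nonneg (sub_nonneg.2 t2.le) hy
    have m3 := mul_nonneg (sub_nonneg.2 t1.le) hz
    have m4 := mul_nonneg (sub_nonneg.2 t2.le) hz
    constructor <;> linarith only [hx, hy, hz, hs, hd, m1, m2, m3, m4]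
  obtain ⟨l1, u1⟩ := bound _ _ _ _ p1 p2 p3 (by linarith) e1
  obtain ⟨l2, u2⟩ := bound _ _ _ _ p2 p3 p1 (by linarith) e2
  obtain ⟨l3, u3⟩ := bound _ _ _ _ p3 p1 p2 (by linarith) e3
  have c1 := cross_term d3 k1 A A' (by linarith) (by linarith) a1
  have c2 := cross_term d1 k2 B B' (by linarith) (by linarith) a2
  have c3 := cross_term d2 k3 C C' (by linarith) (by linarith) a3
  have c4 := cubic_term A A' B B' C C' _ rfl (by
    linarith only [hF, ht, ht0, sq_nonneg (d1 - 1), sq_nonneg (d2 - 1), sq_nonneg (d3 - 1)])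
  have hk : k1 ^ 2 + k2 ^ 2 + k3 ^ 2 ≤ 6.87 * t ^ 2 := by
    have : (k1 + k2 + k3) ^ 2 ≤ (2.62 * t) ^ 2 := by
      apply pow_le_pow_left₀ (by positivity) hsum
    linarith only [this, sq_nonneg t, mul_nonneg p1 p2, mul_nonneg p1 p3, mul_nonneg p2 p3]
  have diag := diag_term d1 d2 d3 t ht ht0 ht1 l1 u1 l2 u2 l3 u3
  have q : t ^ 2 ≤ 0.125 * t := by linarith only [mul_nonneg ht0 (sub_nonneg.2 ht1)]
  clear bound e1 e2 e3 hst hk1 hk2 hk3 ts h1 h2 h3 hF a1 a2 a3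
  linarith

/-- Here `a, …, f` are the Selling parameters `-vᵢ·vⱼ` of an obtuse superbase, in the order
`01, 02, 03, 12, 13, 23`, and the right-hand side is the squared determinant. The hypotheses are
lower bounds for the squared norms of the Voronoi vectors (`hn`, `hc`) and for the sums of squared
norms over triangles of lattice vectors (`ht`), one of which is at least `29`; `hm1` and `hm2` say
that `{01|23}` is the matching of least weight. The squared determinant minus `256` is a nonnegative
combination of products of the hypotheses. -/
lemma gram_bound (a b c d e f : ℝ) (hp0 : 0 ≤ a) (hp1 : 0 ≤ b) (hp2 : 0 ≤ c) (hp3 : 0 ≤ d)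
    (hp4 : 0 ≤ e) (hp5 : 0 ≤ f)
    (hn0 : 0 ≤ a + b + c - 7.57) (hn1 : 0 ≤ a + d + e - 7.57) (hn2 : 0 ≤ b + d + f - 7.57)
    (hn3 : 0 ≤ c + e + f - 7.57) (hc0 : 0 ≤ (a + f) + (b + e) - 7.57)
    (hc2 : 0 ≤ (a + f) + (c + d) - 7.57)
    (ht03 : 0 ≤ 2 * ((a + b + c) + (c + e + f) - c) - 23.56)
    (ht12 : 0 ≤ 2 * ((a + d + e) + (b + d + f) - d) - 23.56)
    (ht02 : 0 ≤ 2 * ((a + b + c) + (b + d + f) - b) - 29)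
    (hm1 : 0 ≤ (b + e) - (a + f)) (hm2 : 0 ≤ (c + d) - (a + f)) :
    256 ≤ (a + b + c) * ((a + d + e) * (b + d + f) - d ^ 2) - a * (a * (b + d + f) + d * b)
      - b * (a * d + (a + d + e) * b) := by
  linarith [mul_nonneg (mul_nonneg hp0 hp1) hn3, mul_nonneg (mul_nonneg hp0 hp2) hn2,
    mul_nonneg (mul_nonneg hp0 hp3) hn3, mul_nonneg (mul_nonneg hp0 hp4) hn2,
    mul_nonneg (mul_nonneg hp0 hp5) ht02, mul_nonneg (mul_nonneg hp0 hp5) hm1,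
    mul_nonneg (mul_nonneg hp0 hp5) hm2, mul_nonneg hp0 hn2, mul_nonneg hp0 hn3,
    mul_nonneg hp0 ht12, mul_nonneg hp0 hm1, mul_nonneg (mul_nonneg hp1 hp2) hn1,
    mul_nonneg (mul_nonneg hp1 hp3) hn3, mul_nonneg (mul_nonneg hp1 hp4) hc2,
    mul_nonneg (mul_nonneg hp1 hp5) hn1, mul_nonneg hp1 hn1, mul_nonneg hp1 hn3,
    mul_nonneg (mul_nonneg hp2 hp3) hc0, mul_nonneg (mul_nonneg hp2 hp3) hm1,
    mul_nonneg (mul_nonneg hp2 hp4) hn2, mul_nonneg (mul_nonneg hp2 hp5) hn1, mul_nonneg hp2 hn1,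
    mul_nonneg hp2 ht12, mul_nonneg (mul_nonneg hp3 hp4) hn0, mul_nonneg (mul_nonneg hp3 hp5) hn0,
    mul_nonneg hp3 hn3, mul_nonneg hp3 ht03, mul_nonneg (mul_nonneg hp4 hp5) hn0,
    mul_nonneg hp4 ht02, mul_nonneg hp5 hn0, mul_nonneg hp5 hn1, mul_nonneg hp5 ht03,
    mul_nonneg hp5 hm1, mul_nonneg hc0 hm2]

/-- The analogue of `gram_bound` in which the triangle conditions are replaced by the lower bound
`52` for the sum of six squared Voronoi norms. -/
lemma gram_bound2 (a b c d e f : ℝ) (hp0 : 0 ≤ a) (hp1 : 0 ≤ b) (hp2 : 0 ≤ c) (hp3 : 0 ≤ d)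
    (hp4 : 0 ≤ e) (hp5 : 0 ≤ f)
    (hn0 : 0 ≤ a + b + c - 7.57) (hn1 : 0 ≤ a + d + e - 7.57) (hn2 : 0 ≤ b + d + f - 7.57)
    (hn3 : 0 ≤ c + e + f - 7.57) (hc0 : 0 ≤ (a + f) + (b + e) - 7.57)
    (hc2 : 0 ≤ (a + f) + (c + d) - 7.57)
    (hm1 : 0 ≤ (b + e) - (a + f)) (hm2 : 0 ≤ (c + d) - (a + f))
    (hS : 0 ≤ 4 * (a + f) + 3 * (b + e) + 3 * (c + d) - 52) :
    256 ≤ (a + b + c) * ((a + d + e) * (b + d + f) - d ^ 2) - a * (a * (b + d + f) + d * b)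
      - b * (a * d + (a + d + e) * b) := by
  linarith [mul_nonneg (mul_nonneg hp0 hp1) hn3, mul_nonneg (mul_nonneg hp0 hp2) hn2,
    mul_nonneg (mul_nonneg hp0 hp3) hn3, mul_nonneg (mul_nonneg hp0 hp4) hn2,
    mul_nonneg (mul_nonneg hp0 hp5) hm1, mul_nonneg (mul_nonneg hp0 hp5) hm2,
    mul_nonneg (mul_nonneg hp0 hp5) hS, mul_nonneg hp0 hn2, mul_nonneg hp0 hn3,
    mul_nonneg (mul_nonneg hp1 hp2) hn1, mul_nonneg (mul_nonneg hp1 hp3) hn3,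
    mul_nonneg (mul_nonneg hp1 hp4) hc2, mul_nonneg (mul_nonneg hp1 hp5) hn1, mul_nonneg hp1 hn1,
    mul_nonneg hp1 hn3, mul_nonneg (mul_nonneg hp2 hp3) hc0, mul_nonneg (mul_nonneg hp2 hp4) hn2,
    mul_nonneg (mul_nonneg hp2 hp5) hn1, mul_nonneg hp2 hn1, mul_nonneg hp2 hn2,
    mul_nonneg (mul_nonneg hp3 hp4) hn0, mul_nonneg (mul_nonneg hp3 hp5) hn0, mul_nonneg hp3 hn0,
    mul_nonneg hp3 hn3, mul_nonneg (mul_nonneg hp4 hp5) hn0, mul_nonneg hp4 hn0,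
    mul_nonneg hp4 hn2, mul_nonneg hp4 hm2, mul_nonneg hp5 hn0, mul_nonneg hp5 hn1,
    mul_nonneg hp5 hm1, mul_nonneg hn0 hn1, mul_nonneg hn2 hn3, mul_nonneg hc0 hm2,
    mul_nonneg hc2 hm1, mul_nonneg hm1 hm2, hS]

/-! ### Facet normals and triangles of admissible vectors -/

/-- The Euclidean inner product on `Fin 3 → ℝ` (whose norm in Mathlib is the sup norm). -/
def dot (x y : Fin 3 → ℝ) : ℝ := x 0 * y 0 + x 1 * y 1 + x 2 * y 2

/-- The rational parts of the coordinates of the twelve facet normals `ico`. -/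
def icoA : Fin 12 → Fin 3 → ℤ :=
  ![![0, 1, 0], ![0, -1, 0], ![0, 0, 1], ![0, 0, -1], ![1, 0, 0], ![-1, 0, 0],
    ![0, -1, 0], ![0, 1, 0], ![0, 0, -1], ![0, 0, 1], ![-1, 0, 0], ![1, 0, 0]]

/-- The coefficients of `τ` in the coordinates of the twelve facet normals `ico`. -/
def icoB : Fin 12 → Fin 3 → ℤ :=
  ![![1, 0, 0], ![1, 0, 0], ![0, 1, 0], ![0, 1, 0], ![0, 0, 1], ![0, 0, 1],
    ![-1, 0, 0], ![-1, 0, 0], ![0, -1, 0], ![0, -1, 0], ![0, 0, -1], ![0, 0, -1]]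

/-- The twelve outer facet normals of the dodecahedron: the vertices `(±τ, ±1, 0)` of an
icosahedron and their cyclic shifts. They are numbered so that `f + 6` is opposite to `f`, and have
coordinates in `ℤ[τ]`, which makes their inner products decidable. -/
noncomputable def ico (f : Fin 12) (i : Fin 3) : ℝ := icoA f i + icoB f i * τ

/-- The inner product of two facet normals, as the pair `(m, n)` standing for `m + n τ`. -/
def ipc (f g : Fin 12) : ℤ × ℤ :=
  (icoA f 0 * icoA g 0 + icoA f 1 * icoA g 1 + icoA f 2 * icoA g 2
    + (icoB f 0 * icoB g 0 + icoB f 1 * icoB g 1 + icoB f 2 * icoB g 2),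
   icoA f 0 * icoB g 0 + icoA f 1 * icoB g 1 + icoA f 2 * icoB g 2
    + (icoB f 0 * icoA g 0 + icoB f 1 * icoA g 1 + icoB f 2 * icoA g 2)
    + (icoB f 0 * icoB g 0 + icoB f 1 * icoB g 1 + icoB f 2 * icoB g 2))

lemma dot_ico (f g : Fin 12) : dot (ico f) (ico g) = (ipc f g).1 + (ipc f g).2 * τ := by
  simp only [dot, ico, ipc]
  push_cast
  linear_combination ((icoB f 0 : ℝ) * icoB g 0 + icoB f 1 * icoB g 1 + icoB f 2 * icoB g 2)
    * tau_sq

lemma ipc_cases : ∀ f g, ipc f g = (2, 1) ∨ ipc f g = (0, 1) ∨ ipc f g = (0, -1) ∨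
    ipc f g = (-2, -1) := by decide +kernel

lemma ipc_comm : ∀ f g, ipc f g = ipc g f := by decide +kernel

lemma ipc_self : ∀ f, ipc f f = (2, 1) := by decide +kernel

lemma ipc_opp : ∀ f g, ipc f g = (-2, -1) → ∀ h, ipc g h = -ipc f h := by decide +kernel

lemma ico_self (f : Fin 12) : dot (ico f) (ico f) = τ + 2 := by
  rw [dot_ico, ipc_self]; push_cast; ring

lemma dot_comm' (x y : Fin 3 → ℝ) : dot x y = dot y x := by simp only [dot]; ring

/-- A lower bound, depending on multipliers `x, y, z`, for the sum of squared norms of a closed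
triangle in terms of the components of its edges in three directions. It is the inequality
`‖V‖² ≥ 2⟨V, W⟩ - ‖W‖²` for `V = (v₁, v₂, v₃)` and `W` the projection of `(x u₁, y u₂, z u₃)` to the
space of closed triangles. -/
lemma tri_bound (v₁ v₂ v₃ u₁ u₂ u₃ : Fin 3 → ℝ) (h : v₁ + v₂ + v₃ = 0) (x y z : ℝ) :
    2 * (x * dot u₁ v₁ + y * dot u₂ v₂ + z * dot u₃ v₃)
      - 2 / 3 * (x ^ 2 * dot u₁ u₁ + y ^ 2 * dot u₂ u₂ + z ^ 2 * dot u₃ u₃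
        - x * y * dot u₁ u₂ - x * z * dot u₁ u₃ - y * z * dot u₂ u₃)
      ≤ dot v₁ v₁ + dot v₂ v₂ + dot v₃ v₃ := by
  have key : ∀ i, 2 * (x * (u₁ i * v₁ i) + y * (u₂ i * v₂ i) + z * (u₃ i * v₃ i))
      - 2 / 3 * (x ^ 2 * (u₁ i * u₁ i) + y ^ 2 * (u₂ i * u₂ i) + z ^ 2 * (u₃ i * u₃ i)
        - x * y * (u₁ i * u₂ i) - x * z * (u₁ i * u₃ i) - y * z * (u₂ i * u₃ i))
      ≤ v₁ i * v₁ i + v₂ i * v₂ i + v₃ i * v₃ i := by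
    intro i
    have h3 : v₃ i = -v₁ i - v₂ i := by
      have := congrFun h i
      simp only [Pi.add_apply, Pi.zero_apply] at this
      linarith
    obtain ⟨m, hm⟩ : ∃ m, m = (x * u₁ i + y * u₂ i + z * u₃ i) / 3 := ⟨_, rfl⟩
    have s1 := sq_nonneg (v₁ i - (x * u₁ i - m))
    have s2 := sq_nonneg (v₂ i - (y * u₂ i - m))
    have s3 := sq_nonneg (v₃ i - (z * u₃ i - m))
    rw [h3] at s3 ⊢
    rw [hm] at s1 s2 s3
    linarith
  have k0 := key 0
  have k1 := key 1
  have k2 := key 2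
  simp only [dot]
  linarith

lemma norm_bound (u v : Fin 3 → ℝ) (hu : dot u u = τ + 2) (h : 2 * τ + 2 ≤ dot u v) :
    7.57 ≤ dot v v := by
  have e : dot v v = 2 * 1.447 * dot u v - 1.447 ^ 2 * dot u u
      + ((v 0 - 1.447 * u 0) ^ 2 + (v 1 - 1.447 * u 1) ^ 2 + (v 2 - 1.447 * u 2) ^ 2) := by
    simp only [dot]; ring
  have := tau_gt
  have := tau_lt
  rw [e, hu]
  nlinarith [sq_nonneg (v 0 - 1.447 * u 0), sq_nonneg (v 1 - 1.447 * u 1),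
    sq_nonneg (v 2 - 1.447 * u 2)]

/-- If two edges of a closed triangle lie beyond opposite facets, the triangle is large. The
numerical multipliers approximate the optimal ones in each configuration of the third facet. -/
lemma opp_bound (v₁ v₂ v₃ : Fin 3 → ℝ) (f₁ f₂ f₃ : Fin 12) (h : v₁ + v₂ + v₃ = 0)
    (h₁ : 2 * τ + 2 ≤ dot (ico f₁) v₁) (h₂ : 2 * τ + 2 ≤ dot (ico f₂) v₂)
    (h₃ : 2 * τ + 2 ≤ dot (ico f₃) v₃) (hopp : ipc f₁ f₂ = (-2, -1)) :
    29 ≤ dot v₁ v₁ + dot v₂ v₂ + dot v₃ v₃ := by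
  have key := tri_bound v₁ v₂ v₃ (ico f₁) (ico f₂) (ico f₃) h
  rw [ico_self, ico_self, ico_self, dot_ico f₁ f₂, dot_ico f₁ f₃, dot_ico f₂ f₃,
    ipc_opp f₁ f₂ hopp f₃, hopp] at key
  have t1 := tau_gt
  have t2 := tau_lt
  rcases ipc_cases f₁ f₃ with e | e | e | e <;> rw [e] at key <;>
    simp only [Prod.neg_mk, neg_neg, neg_zero] at key <;> push_cast at key
  · have := key 4.3 0 4.3
    linarith
  · have := key 2.66 0.23 2.71
    linarith
  · have := key 0.23 2.66 2.71
    linarith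
  · have := key 0 4.3 4.3
    linarith

/-- A closed triangle of vectors beyond facets `f₁, f₂, f₃` either has sum of squared norms at
least `29`, or the three facet normals have pairwise inner product `-τ`. -/
lemma triple_bound (v₁ v₂ v₃ : Fin 3 → ℝ) (f₁ f₂ f₃ : Fin 12) (h : v₁ + v₂ + v₃ = 0)
    (h₁ : 2 * τ + 2 ≤ dot (ico f₁) v₁) (h₂ : 2 * τ + 2 ≤ dot (ico f₂) v₂)
    (h₃ : 2 * τ + 2 ≤ dot (ico f₃) v₃) :
    29 ≤ dot v₁ v₁ + dot v₂ v₂ + dot v₃ v₃ ∨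
      (23.56 ≤ dot v₁ v₁ + dot v₂ v₂ + dot v₃ v₃ ∧
        ipc f₁ f₂ = (0, -1) ∧ ipc f₁ f₃ = (0, -1) ∧ ipc f₂ f₃ = (0, -1)) := by
  by_cases o12 : ipc f₁ f₂ = (-2, -1)
  · exact Or.inl (opp_bound _ _ _ _ _ _ h h₁ h₂ h₃ o12)
  by_cases o13 : ipc f₁ f₃ = (-2, -1)
  · have := opp_bound v₁ v₃ v₂ f₁ f₃ f₂ (by rw [← h]; abel) h₁ h₃ h₂ o13
    left; linarith
  by_cases o23 : ipc f₂ f₃ = (-2, -1)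
  · have := opp_bound v₂ v₃ v₁ f₂ f₃ f₁ (by rw [← h]; abel) h₂ h₃ h₁ o23
    left; linarith
  have t1 := tau_gt
  have t2 := tau_lt
  have key := tri_bound v₁ v₂ v₃ (ico f₁) (ico f₂) (ico f₃) h
  rw [ico_self, ico_self, ico_self] at key
  have low : ∀ f g, ipc f g ≠ (-2, -1) →
      ipc f g = (0, -1) ∧ dot (ico f) (ico g) = -τ ∨ τ ≤ dot (ico f) (ico g) := by
    intro f g hfg
    rw [dot_ico]
    rcases ipc_cases f g with e | e | e | e
    · right; rw [e]; push_cast; linarith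
    · right; rw [e]; push_cast; linarith
    · left; refine ⟨e, ?_⟩; rw [e]; push_cast; ring
    · exact absurd e hfg
  have k1 := key 1.9 1.9 1.9
  rcases low _ _ o12 with ⟨e12, e12'⟩ | e12
  · rcases low _ _ o13 with ⟨e13, e13'⟩ | e13
    · rcases low _ _ o23 with ⟨e23, e23'⟩ | e23
      · right
        refine ⟨?_, e12, e13, e23⟩
        have k2 := key 1.5 1.5 1.5
        linarith
      · left; linarith
    · left
      rcases low _ _ o23 with ⟨e23, e23'⟩ | e23 <;> linarith
  · left
    rcases low _ _ o13 with ⟨e13, e13'⟩ | e13 <;>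
      rcases low _ _ o23 with ⟨e23, e23'⟩ | e23 <;> linarith

set_option synthInstance.maxHeartbeats 400000 in
set_option synthInstance.maxSize 2000 in
/-- If the facets of all four Voronoi triangles are in the exceptional position of `triple_bound`,
then, up to the two cases listed, all inner products between the six facet normals are
determined. -/
lemma combi : ∀ f0 f2, ipc f0 f2 = (0, -1) → ∀ fs, ipc f0 fs = (0, 1) → ipc f2 fs = (0, 1) →
    ∀ f3, ipc f0 f3 = (0, -1) → ipc f3 fs = (0, -1) →
    ∀ f1, ipc f1 f3 = (0, -1) → ipc f1 f2 = (0, -1) → ipc f1 fs = (0, -1) →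
    ∀ ft, ipc f0 ft = (0, 1) → ipc f3 ft = (0, 1) → ipc f1 ft = (0, -1) → ipc f2 ft = (0, -1) →
    (ipc f0 f1 = (0, 1) ∧ ipc f2 f3 = (0, -1) ∧ ipc fs ft = (0, 1)) ∨
    (ipc f0 f1 = (0, -1) ∧ ipc f2 f3 = (0, 1) ∧ ipc fs ft = (0, -1)) := by decide +kernel

/-! ### Comparison with an orthonormal frame -/

/-- The determinant of three vectors of `ℝ³`. -/
def det3 (x y z : Fin 3 → ℝ) : ℝ :=
  x 0 * (y 1 * z 2 - y 2 * z 1) - x 1 * (y 0 * z 2 - y 2 * z 0) + x 2 * (y 0 * z 1 - y 1 * z 0)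

lemma dot_add_left (x y z : Fin 3 → ℝ) : dot (x + y) z = dot x z + dot y z := by
  simp only [dot, Pi.add_apply]; ring

lemma dot_add_right (x y z : Fin 3 → ℝ) : dot x (y + z) = dot x y + dot x z := by
  simp only [dot, Pi.add_apply]; ring

lemma dot_sub_left (x y z : Fin 3 → ℝ) : dot (x - y) z = dot x z - dot y z := by
  simp only [dot, Pi.sub_apply]; ring

lemma dot_sub_right (x y z : Fin 3 → ℝ) : dot x (y - z) = dot x y - dot x z := by
  simp only [dot, Pi.sub_apply]; ring

lemma dot_smul_left (a : ℝ) (x y : Fin 3 → ℝ) : dot (a • x) y = a * dot x y := by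
  simp only [dot, Pi.smul_apply, smul_eq_mul]; ring

lemma dot_smul_right (a : ℝ) (x y : Fin 3 → ℝ) : dot x (a • y) = a * dot x y := by
  simp only [dot, Pi.smul_apply, smul_eq_mul]; ring

lemma dot_neg_left (x y : Fin 3 → ℝ) : dot (-x) y = -dot x y := by
  simp only [dot, Pi.neg_apply]; ring

lemma dot_neg_right (x y : Fin 3 → ℝ) : dot x (-y) = -dot x y := by
  simp only [dot, Pi.neg_apply]; ring

lemma dot_self_nonneg (x : Fin 3 → ℝ) : 0 ≤ dot x x := by
  simp only [dot]
  have := mul_self_nonneg (x 0)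
  have := mul_self_nonneg (x 1)
  have := mul_self_nonneg (x 2)
  linarith

lemma eq_zero_of_dot_self (x : Fin 3 → ℝ) (h : dot x x = 0) : x = 0 := by
  simp only [dot] at h
  have h0 := mul_self_nonneg (x 0)
  have h1 := mul_self_nonneg (x 1)
  have h2 := mul_self_nonneg (x 2)
  have e0 : x 0 = 0 := mul_self_eq_zero.1 (by linarith)
  have e1 : x 1 = 0 := mul_self_eq_zero.1 (by linarith)
  have e2 : x 2 = 0 := mul_self_eq_zero.1 (by linarith)
  funext i
  fin_cases i
  · exact e0
  · exact e1
  · exact e2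

/-- Multiplicativity of the determinant, in terms of the matrix of inner products. -/
lemma det3_mul (e₁ e₂ e₃ w₁ w₂ w₃ : Fin 3 → ℝ) :
    det3 e₁ e₂ e₃ * det3 w₁ w₂ w₃ =
      dot e₁ w₁ * dot e₂ w₂ * dot e₃ w₃ + dot e₁ w₂ * dot e₂ w₃ * dot e₃ w₁
        + dot e₂ w₁ * dot e₃ w₂ * dot e₁ w₃ - dot e₁ w₁ * (dot e₂ w₃ * dot e₃ w₂)
        - dot e₂ w₂ * (dot e₃ w₁ * dot e₁ w₃) - dot e₃ w₃ * (dot e₁ w₂ * dot e₂ w₁) := by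
  simp only [det3, dot]; ring

lemma bessel (e₁ e₂ e₃ w : Fin 3 → ℝ) (h11 : dot e₁ e₁ = 1) (h22 : dot e₂ e₂ = 1)
    (h33 : dot e₃ e₃ = 1) (h12 : dot e₁ e₂ = 0) (h13 : dot e₁ e₃ = 0) (h23 : dot e₂ e₃ = 0) :
    dot e₁ w ^ 2 + dot e₂ w ^ 2 + dot e₃ w ^ 2 ≤ dot w w := by
  have h := dot_self_nonneg (w - (dot e₁ w • e₁ + dot e₂ w • e₂ + dot e₃ w • e₃))
  simp only [dot_sub_left, dot_sub_right, dot_add_left, dot_add_right, dot_smul_left,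
    dot_smul_right, dot_comm' e₂ e₁, dot_comm' e₃ e₁, dot_comm' e₃ e₂, dot_comm' w, h11, h22,
    h33, h12, h13, h23] at h
  linarith

/-- `d3_ineq` in vector form: `w₁, w₂, w₃` are compared with an orthonormal frame. -/
lemma frame_bound (e₁ e₂ e₃ w₁ w₂ w₃ : Fin 3 → ℝ) (h11 : dot e₁ e₁ = 1) (h22 : dot e₂ e₂ = 1)
    (h33 : dot e₃ e₃ = 1) (h12 : dot e₁ e₂ = 0) (h13 : dot e₁ e₃ = 0) (h23 : dot e₂ e₃ = 0)
    (c0 : τ ^ 2 ≤ dot (τ • e₁ + e₂) (w₁ + w₂)) (c1 : τ ^ 2 ≤ dot (τ • e₁ - e₂) (w₁ - w₂))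
    (cs : τ ^ 2 ≤ dot (τ • e₂ + e₃) (w₂ + w₃)) (ct : τ ^ 2 ≤ dot (τ • e₂ - e₃) (w₂ - w₃))
    (c2 : τ ^ 2 ≤ dot (τ • e₃ - e₁) (w₃ - w₁)) (c3 : τ ^ 2 ≤ dot (τ • e₃ + e₁) (w₃ + w₁))
    (hF : dot w₁ w₁ + dot w₂ w₂ + dot w₃ w₃ ≤ 3.25) : 1 ≤ det3 w₁ w₂ w₃ ^ 2 := by
  have b1 := bessel e₁ e₂ e₃ w₁ h11 h22 h33 h12 h13 h23
  have b2 := bessel e₁ e₂ e₃ w₂ h11 h22 h33 h12 h13 h23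
  have b3 := bessel e₁ e₂ e₃ w₃ h11 h22 h33 h12 h13 h23
  simp only [dot_sub_left, dot_sub_right, dot_add_left, dot_add_right, dot_smul_left]
    at c0 c1 cs ct c2 c3
  have hL := d3_ineq (dot e₁ w₁) (dot e₂ w₂) (dot e₃ w₃) (dot e₁ w₂) (dot e₂ w₁) (dot e₂ w₃)
    (dot e₃ w₂) (dot e₃ w₁) (dot e₁ w₃)
    (by rcases abs_cases (τ * dot e₁ w₂ + dot e₂ w₁) with ⟨h, -⟩ | ⟨h, -⟩ <;> rw [h] <;> linarith)
    (by rcases abs_cases (τ * dot e₂ w₃ + dot e₃ w₂) with ⟨h, -⟩ | ⟨h, -⟩ <;> rw [h] <;> linarith)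
    (by rcases abs_cases (τ * dot e₃ w₁ + dot e₁ w₃) with ⟨h, -⟩ | ⟨h, -⟩ <;> rw [h] <;> linarith)
    (by linarith)
  rw [← det3_mul] at hL
  have hE : det3 e₁ e₂ e₃ * det3 e₁ e₂ e₃ = 1 := by
    rw [det3_mul, h11, h22, h33, h12, h13, h23]; ring
  have hsq : 1 ≤ (det3 e₁ e₂ e₃ * det3 w₁ w₂ w₃) ^ 2 := one_le_pow₀ hL
  have : (det3 e₁ e₂ e₃ * det3 w₁ w₂ w₃) ^ 2 = det3 w₁ w₂ w₃ ^ 2 := by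
    linear_combination det3 w₁ w₂ w₃ ^ 2 * hE
  linarith

set_option linter.unusedSimpArgs false in
/-- The locally constrained case: if the six facet normals have the inner products of those
touched by the fcc superbase `v0, …, v3` and its sums, and the superbase is not too long, then the
determinant is at least `16` in absolute value. -/
lemma family_bound (v0 v1 v2 v3 u0 u1 u2 u3 us ut : Fin 3 → ℝ) (hv : v0 + v1 + v2 + v3 = 0)
    (n0 : dot u0 u0 = τ + 2) (n1 : dot u1 u1 = τ + 2) (n2 : dot u2 u2 = τ + 2)
    (n3 : dot u3 u3 = τ + 2) (ns : dot us us = τ + 2) (nt : dot ut ut = τ + 2)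
    (d01 : dot u0 u1 = τ) (dst : dot us ut = τ)
    (d02 : dot u0 u2 = -τ) (d03 : dot u0 u3 = -τ) (d12 : dot u1 u2 = -τ) (d13 : dot u1 u3 = -τ)
    (d0s : dot u0 us = τ) (d1s : dot u1 us = -τ) (d2s : dot u2 us = τ) (d3s : dot u3 us = -τ)
    (d0t : dot u0 ut = τ) (d1t : dot u1 ut = -τ) (d2t : dot u2 ut = -τ) (d3t : dot u3 ut = τ)
    (c0 : 2 * τ + 2 ≤ dot u0 v0) (c1 : 2 * τ + 2 ≤ dot u1 v1) (c2 : 2 * τ + 2 ≤ dot u2 v2)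
    (c3 : 2 * τ + 2 ≤ dot u3 v3) (cs : 2 * τ + 2 ≤ dot us (v0 + v2))
    (ct : 2 * τ + 2 ≤ dot ut (v0 + v3))
    (hF : dot v0 v0 + dot v1 v1 + dot v2 v2 + dot v3 v3 + dot (v0 + v2) (v0 + v2)
      + dot (v0 + v3) (v0 + v3) ≤ 52) : 256 ≤ det3 v0 v1 v2 ^ 2 := by
  have ts := tau_sq
  -- `e₁, e₂, e₃` is the orthonormal frame; `w₁, w₂, w₃` is the lattice in the same coordinates,
  -- scaled so that `wᵢ = eᵢ` for the fcc lattice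
  obtain ⟨e₁, he₁⟩ : ∃ e, e = ((τ - 1) / 2) • (u0 + u1) := ⟨_, rfl⟩
  obtain ⟨e₂, he₂⟩ : ∃ e, e = (1 / 2 : ℝ) • (u0 - u1) := ⟨_, rfl⟩
  obtain ⟨e₃, he₃⟩ : ∃ e, e = (1 / 2 : ℝ) • (us - ut) := ⟨_, rfl⟩
  obtain ⟨w₁, hw₁⟩ : ∃ e, e = (1 / 4 : ℝ) • (v0 + v1) := ⟨_, rfl⟩
  obtain ⟨w₂, hw₂⟩ : ∃ e, e = (1 / 4 : ℝ) • (v0 - v1) := ⟨_, rfl⟩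
  obtain ⟨w₃, hw₃⟩ : ∃ e, e = (1 / 4 : ℝ) • (v2 - v3) := ⟨_, rfl⟩
  have q0 : τ • e₁ + e₂ = u0 := by
    rw [he₁, he₂]; funext i; simp only [Pi.add_apply, Pi.sub_apply, Pi.smul_apply, smul_eq_mul]
    linear_combination (u0 i + u1 i) / 2 * ts
  have q1 : τ • e₁ - e₂ = u1 := by
    rw [he₁, he₂]; funext i; simp only [Pi.add_apply, Pi.sub_apply, Pi.smul_apply, smul_eq_mul]
    linear_combination (u0 i + u1 i) / 2 * ts
  -- the inner products determine the remaining normals: each difference has norm zero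
  have comm := dot_comm'
  have zero : ∀ x y : Fin 3 → ℝ, dot (x - y) (x - y) = 0 → x = y := fun x y h =>
    sub_eq_zero.1 (eq_zero_of_dot_self _ h)
  have q2 : τ • e₃ - e₁ = u2 := by
    apply zero
    rw [he₁, he₃]
    simp only [dot_sub_left, dot_sub_right, dot_add_left, dot_add_right, dot_smul_left,
      dot_smul_right, comm u1 u0, comm u2 u0, comm u2 u1, comm us u0, comm us u1, comm us u2,
      comm ut u0, comm ut u1, comm ut u2, comm ut us, n0, n1, d01, n2, d02, d12, ns, d0s, d1s,
      d2s, nt, d0t, d1t, d2t, dst]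
    clear * - ts
    grind
  have q3 : -(τ • e₃ + e₁) = u3 := by
    apply zero
    rw [he₁, he₃]
    simp only [dot_sub_left, dot_neg_left, dot_neg_right, dot_sub_right, dot_add_left,
      dot_add_right, dot_smul_left, dot_smul_right, comm u1 u0, comm u3 u0, comm u3 u1,
      comm us u0, comm us u1, comm us u3,
      comm ut u0, comm ut u1, comm ut u3, comm ut us, n0, n1, d01, n3, d03, d13, ns, d0s, d1s,
      d3s, nt, d0t, d1t, d3t, dst]
    clear * - ts
    grind
  have qs : τ • e₂ + e₃ = us := by
    apply zero
    rw [he₂, he₃]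
    simp only [dot_sub_left, dot_sub_right, dot_add_left, dot_add_right, dot_smul_left,
      dot_smul_right, comm u1 u0, comm us u0, comm us u1, comm ut u0, comm ut u1, comm ut us,
      n0, n1, d01, ns, d0s, d1s, nt, d0t, d1t, dst]
    clear * - ts
    grind
  have qt : τ • e₂ - e₃ = ut := by
    apply zero
    rw [he₂, he₃]
    simp only [dot_sub_left, dot_sub_right, dot_add_left, dot_add_right, dot_smul_left,
      dot_smul_right, comm u1 u0, comm us u0, comm us u1, comm ut u0, comm ut u1, comm ut us,
      n0, n1, d01, ns, d0s, d1s, nt, d0t, d1t, dst]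
    clear * - ts
    grind
  have h11 : dot e₁ e₁ = 1 := by
    rw [he₁]
    simp only [dot_sub_left, dot_sub_right, dot_add_left, dot_add_right, dot_smul_left,
      dot_smul_right, comm u1 u0, comm us u0, comm us u1, comm ut u0, comm ut u1, comm ut us,
      n0, n1, d01, ns, d0s, d1s, nt, d0t, d1t, dst]
    clear * - ts
    grind
  have h22 : dot e₂ e₂ = 1 := by
    rw [he₂]
    simp only [dot_sub_left, dot_sub_right, dot_add_left, dot_add_right, dot_smul_left,
      dot_smul_right, comm u1 u0, comm us u0, comm us u1, comm ut u0, comm ut u1, comm ut us,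
      n0, n1, d01, ns, d0s, d1s, nt, d0t, d1t, dst]
    clear * - ts
    grind
  have h33 : dot e₃ e₃ = 1 := by
    rw [he₃]
    simp only [dot_sub_left, dot_sub_right, dot_add_left, dot_add_right, dot_smul_left,
      dot_smul_right, comm u1 u0, comm us u0, comm us u1, comm ut u0, comm ut u1, comm ut us,
      n0, n1, d01, ns, d0s, d1s, nt, d0t, d1t, dst]
    clear * - ts
    grind
  have h12 : dot e₁ e₂ = 0 := by
    rw [he₁, he₂]
    simp only [dot_sub_left, dot_sub_right, dot_add_left, dot_add_right, dot_smul_left,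
      dot_smul_right, comm u1 u0, comm us u0, comm us u1, comm ut u0, comm ut u1, comm ut us,
      n0, n1, d01, ns, d0s, d1s, nt, d0t, d1t, dst]
    clear * - ts
    grind
  have h13 : dot e₁ e₃ = 0 := by
    rw [he₁, he₃]
    simp only [dot_sub_left, dot_sub_right, dot_add_left, dot_add_right, dot_smul_left,
      dot_smul_right, comm u1 u0, comm us u0, comm us u1, comm ut u0, comm ut u1, comm ut us,
      n0, n1, d01, ns, d0s, d1s, nt, d0t, d1t, dst]
    clear * - ts
    grind
  have h23 : dot e₂ e₃ = 0 := by
    rw [he₂, he₃]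
    simp only [dot_sub_left, dot_sub_right, dot_add_left, dot_add_right, dot_smul_left,
      dot_smul_right, comm u1 u0, comm us u0, comm us u1, comm ut u0, comm ut u1, comm ut us,
      n0, n1, d01, ns, d0s, d1s, nt, d0t, d1t, dst]
    clear * - ts
    grind
  have hv3 : v3 = -(v0 + v1 + v2) := by
    rw [eq_neg_iff_add_eq_zero, ← hv]; abel
  have r0 : v0 = (2 : ℝ) • (w₁ + w₂) := by rw [hw₁, hw₂]; module
  have r1 : v1 = (2 : ℝ) • (w₁ - w₂) := by rw [hw₁, hw₂]; module
  have r2 : v2 = (2 : ℝ) • (w₃ - w₁) := by rw [hw₁, hw₃, hv3]; module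
  have r3 : v3 = (2 : ℝ) • -(w₃ + w₁) := by rw [hw₁, hw₃, hv3]; module
  have rs : v0 + v2 = (2 : ℝ) • (w₂ + w₃) := by rw [r0, r2]; module
  have rt : v0 + v3 = (2 : ℝ) • (w₂ - w₃) := by rw [r0, r3]; module
  rw [rs, rt, r0, r1, r2, r3] at hF
  rw [rs, ← qs, dot_smul_right] at cs
  rw [rt, ← qt, dot_smul_right] at ct
  rw [r0, ← q0, dot_smul_right] at c0
  rw [r1, ← q1, dot_smul_right] at c1
  rw [r2, ← q2, dot_smul_right] at c2
  rw [r3, ← q3, dot_smul_right, dot_neg_left, dot_neg_right, neg_neg] at c3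
  have t2 : τ ^ 2 = τ + 1 := by rw [sq, ts]
  have fb := frame_bound e₁ e₂ e₃ w₁ w₂ w₃ h11 h22 h33 h12 h13 h23 (by linarith) (by linarith)
    (by linarith) (by linarith) (by linarith) (by linarith) (by
      simp only [dot_sub_left, dot_sub_right, dot_add_left, dot_add_right, dot_smul_left,
        dot_smul_right, dot_neg_left, dot_neg_right] at hF
      linarith)
  have hd : det3 v0 v1 v2 = -(16 * det3 w₁ w₂ w₃) := by
    rw [r0, r1, r2]
    simp only [det3, Pi.add_apply, Pi.sub_apply, Pi.smul_apply, smul_eq_mul]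
    ring
  rw [hd]
  linarith

/-! ### Obtuse superbases -/

lemma icoA_neg : ∀ f i, icoA (f + 6) i = -icoA f i := by decide +kernel

lemma icoB_neg : ∀ f i, icoB (f + 6) i = -icoB f i := by decide +kernel

lemma ipc_neg : ∀ f g, ipc f (g + 6) = -ipc f g := by decide +kernel

lemma ico_neg (f : Fin 12) : ico (f + 6) = -ico f := by
  funext i
  simp only [ico, Pi.neg_apply, icoA_neg, icoB_neg]
  push_cast
  ring

lemma ipc_flip {f g : Fin 12} (h : ipc f (g + 6) = (0, -1)) : ipc f g = (0, 1) := by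
  rw [ipc_neg] at h
  rw [← neg_neg (ipc f g), h]
  rfl

lemma dot_tau {f g : Fin 12} (h : ipc f g = (0, 1)) : dot (ico f) (ico g) = τ := by
  rw [dot_ico, h]; push_cast; ring

lemma dot_neg_tau {f g : Fin 12} (h : ipc f g = (0, -1)) : dot (ico f) (ico g) = -τ := by
  rw [dot_ico, h]; push_cast; ring

set_option maxHeartbeats 2000000 in
/-- The determinant bound for an obtuse superbase whose seven Voronoi vectors, apart from
`±(v0 + v1)`, lie beyond the facets `f0, f1, f2, f3, fs, ft`. The hypotheses `m1`, `m2` say that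
`{01|23}` is the matching of least weight. -/
lemma core (v0 v1 v2 v3 : Fin 3 → ℝ) (f0 f1 f2 f3 fs ft : Fin 12) (hv : v0 + v1 + v2 + v3 = 0)
    (p01 : dot v0 v1 ≤ 0) (p02 : dot v0 v2 ≤ 0) (p03 : dot v0 v3 ≤ 0)
    (p12 : dot v1 v2 ≤ 0) (p13 : dot v1 v3 ≤ 0) (p23 : dot v2 v3 ≤ 0)
    (c0 : 2 * τ + 2 ≤ dot (ico f0) v0) (c1 : 2 * τ + 2 ≤ dot (ico f1) v1)
    (c2 : 2 * τ + 2 ≤ dot (ico f2) v2) (c3 : 2 * τ + 2 ≤ dot (ico f3) v3)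
    (cs : 2 * τ + 2 ≤ dot (ico fs) (v0 + v2)) (ct : 2 * τ + 2 ≤ dot (ico ft) (v0 + v3))
    (m1 : dot v0 v2 + dot v1 v3 ≤ dot v0 v1 + dot v2 v3)
    (m2 : dot v0 v3 + dot v1 v2 ≤ dot v0 v1 + dot v2 v3) :
    256 ≤ det3 v0 v1 v2 ^ 2 := by
  have hv3 : v3 = -(v0 + v1 + v2) := by
    rw [eq_neg_iff_add_eq_zero, ← hv]; abel
  have z1 : v1 + v3 + (v0 + v2) = 0 := by rw [← hv]; abel
  have z2 : v1 + v2 + (v0 + v3) = 0 := by rw [← hv]; abel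
  obtain ⟨a, ha⟩ : ∃ a, a = -dot v0 v1 := ⟨_, rfl⟩
  obtain ⟨b, hb⟩ : ∃ a, a = -dot v0 v2 := ⟨_, rfl⟩
  obtain ⟨c, hc⟩ : ∃ a, a = -dot v0 v3 := ⟨_, rfl⟩
  obtain ⟨d, hd⟩ : ∃ a, a = -dot v1 v2 := ⟨_, rfl⟩
  obtain ⟨e, he⟩ : ∃ a, a = -dot v1 v3 := ⟨_, rfl⟩
  obtain ⟨f, hf⟩ : ∃ a, a = -dot v2 v3 := ⟨_, rfl⟩
  have N0 : dot v0 v0 = a + b + c := by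
    rw [ha, hb, hc, hv3]; simp only [dot_neg_right, dot_add_right]; ring
  have N1 : dot v1 v1 = a + d + e := by
    rw [ha, hd, he, hv3, dot_comm' v0 v1]; simp only [dot_neg_right, dot_add_right]; ring
  have N2 : dot v2 v2 = b + d + f := by
    rw [hb, hd, hf, hv3, dot_comm' v0 v2, dot_comm' v1 v2]
    simp only [dot_neg_right, dot_add_right]; ring
  have N3 : dot v3 v3 = c + e + f := by
    rw [hc, he, hf, ← neg_add, ← neg_add, ← dot_add_left, ← dot_add_left]
    nth_rewrite 1 [hv3]
    rw [dot_neg_left]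
  have Ns : dot (v0 + v2) (v0 + v2) = a + c + d + f := by
    simp only [dot_add_left, dot_add_right, dot_comm' v2 v0]; linarith
  have Nt : dot (v0 + v3) (v0 + v3) = a + b + e + f := by
    simp only [dot_add_left, dot_add_right, dot_comm' v3 v0]; linarith
  have hT : det3 v0 v1 v2 ^ 2 = (a + b + c) * ((a + d + e) * (b + d + f) - d ^ 2)
      - a * (a * (b + d + f) + d * b) - b * (a * d + (a + d + e) * b) := by
    rw [sq, det3_mul, dot_comm' v1 v0, dot_comm' v2 v0, dot_comm' v2 v1, N0, N1, N2,
      show dot v0 v1 = -a by linarith, show dot v0 v2 = -b by linarith,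
      show dot v1 v2 = -d by linarith]
    ring
  have n0 := norm_bound _ v0 (ico_self f0) c0
  have n1 := norm_bound _ v1 (ico_self f1) c1
  have n2 := norm_bound _ v2 (ico_self f2) c2
  have n3 := norm_bound _ v3 (ico_self f3) c3
  have ns := norm_bound _ _ (ico_self fs) cs
  have nt := norm_bound _ _ (ico_self ft) ct
  have cs' : 2 * τ + 2 ≤ dot (ico (fs + 6)) (-(v0 + v2)) := by
    rwa [ico_neg, dot_neg_left, dot_neg_right, neg_neg]
  have ct' : 2 * τ + 2 ≤ dot (ico (ft + 6)) (-(v0 + v3)) := by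
    rwa [ico_neg, dot_neg_left, dot_neg_right, neg_neg]
  have T02 := triple_bound v0 v2 (-(v0 + v2)) f0 f2 (fs + 6) (by abel) c0 c2 cs'
  have T13 := triple_bound v1 v3 (v0 + v2) f1 f3 fs z1 c1 c3 cs
  have T03 := triple_bound v0 v3 (-(v0 + v3)) f0 f3 (ft + 6) (by abel) c0 c3 ct'
  have T12 := triple_bound v1 v2 (v0 + v3) f1 f2 ft z2 c1 c2 ct
  rw [dot_neg_left, dot_neg_right, neg_neg] at T02 T03
  rw [N0, N2, Ns] at T02
  rw [N1, N3, Ns] at T13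
  rw [N0, N3, Nt] at T03
  rw [N1, N2, Nt] at T12
  have L02 := T02.elim (fun h => show (23.56 : ℝ) ≤ _ by linarith) And.left
  have L13 := T13.elim (fun h => show (23.56 : ℝ) ≤ _ by linarith) And.left
  have L03 := T03.elim (fun h => show (23.56 : ℝ) ≤ _ by linarith) And.left
  have L12 := T12.elim (fun h => show (23.56 : ℝ) ≤ _ by linarith) And.left
  rw [N0] at n0
  rw [N1] at n1
  rw [N2] at n2
  rw [N3] at n3
  rw [Ns] at ns
  rw [Nt] at nt
  by_contra hlt
  rw [not_le] at hlt
  have hlt' := hT ▸ hlt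
  have G02 := T02.resolve_left (fun h => by
    have := gram_bound a b c d e f (by linarith) (by linarith) (by linarith) (by linarith)
      (by linarith) (by linarith) (by linarith) (by linarith) (by linarith) (by linarith)
      (by linarith) (by linarith) (by linarith) (by linarith) (by linarith) (by linarith)
      (by linarith)
    linarith)
  have G13 := T13.resolve_left (fun h => by
    have := gram_bound a e d c b f (by linarith) (by linarith) (by linarith) (by linarith)
      (by linarith) (by linarith) (by linarith) (by linarith) (by linarith) (by linarith)
      (by linarith) (by linarith) (by linarith) (by linarith) (by linarith) (by linarith)
      (by linarith)
    linarith)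
  have G03 := T03.resolve_left (fun h => by
    have := gram_bound a c b e d f (by linarith) (by linarith) (by linarith) (by linarith)
      (by linarith) (by linarith) (by linarith) (by linarith) (by linarith) (by linarith)
      (by linarith) (by linarith) (by linarith) (by linarith) (by linarith) (by linarith)
      (by linarith)
    linarith)
  have G12 := T12.resolve_left (fun h => by
    have := gram_bound a d e b c f (by linarith) (by linarith) (by linarith) (by linarith)
      (by linarith) (by linarith) (by linarith) (by linarith) (by linarith) (by linarith)
      (by linarith) (by linarith) (by linarith) (by linarith) (by linarith) (by linarith)
      (by linarith)
    linarith)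
  obtain ⟨-, g02, g0s, g2s⟩ := G02
  obtain ⟨-, g13, g1s, g3s⟩ := G13
  obtain ⟨-, g03, g0t, g3t⟩ := G03
  obtain ⟨-, g12, g1t, g2t⟩ := G12
  have hF : a + b + c + (a + d + e) + (b + d + f) + (c + e + f) + (a + c + d + f)
      + (a + b + e + f) ≤ 52 := by
    by_contra hS
    have := gram_bound2 a b c d e f (by linarith) (by linarith) (by linarith) (by linarith)
      (by linarith) (by linarith) (by linarith) (by linarith) (by linarith) (by linarith)
      (by linarith) (by linarith) (by linarith) (by linarith) (by linarith)
    linarith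
  replace g0s := ipc_flip g0s
  replace g2s := ipc_flip g2s
  replace g0t := ipc_flip g0t
  replace g3t := ipc_flip g3t
  rcases combi f0 f2 g02 fs g0s g2s f3 g03 g3s f1 g13 g12 g1s ft g0t g3t g1t g2t with
    ⟨g01, g23, gst⟩ | ⟨g01, g23, gst⟩
  · have := family_bound v0 v1 v2 v3 (ico f0) (ico f1) (ico f2) (ico f3) (ico fs) (ico ft) hv
      (ico_self _) (ico_self _) (ico_self _) (ico_self _) (ico_self _) (ico_self _)
      (dot_tau g01) (dot_tau gst) (dot_neg_tau g02) (dot_neg_tau g03)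
      (dot_neg_tau g12) (dot_neg_tau g13) (dot_tau g0s) (dot_neg_tau g1s) (dot_tau g2s)
      (dot_neg_tau g3s) (dot_tau g0t) (dot_neg_tau g1t) (dot_neg_tau g2t) (dot_tau g3t)
      c0 c1 c2 c3 cs ct (by rw [N0, N1, N2, N3, Ns, Nt]; linarith)
    linarith
  -- the second configuration is the first one with the pairs `{0, 1}` and `{2, 3}` exchanged
  · have hz : v2 + v3 + v0 + v1 = 0 := by rw [← hv]; abel
    have ht : v2 + v1 = -(v0 + v3) := by rw [← sub_eq_zero, ← hv]; abel
    have hs : v2 + v0 = v0 + v2 := add_comm _ _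
    have hm : ∀ x, dot x (ico (ft + 6)) = -dot x (ico ft) := fun x => by
      rw [ico_neg, dot_neg_right]
    have := family_bound v2 v3 v0 v1 (ico f2) (ico f3) (ico f0) (ico f1) (ico fs) (ico (ft + 6)) hz
      (ico_self _) (ico_self _) (ico_self _) (ico_self _) (ico_self _) (ico_self _)
      (dot_tau g23) (by rw [hm, dot_neg_tau gst, neg_neg])
      (by rw [dot_comm', dot_neg_tau g02]) (by rw [dot_comm', dot_neg_tau g12])
      (by rw [dot_comm', dot_neg_tau g03]) (by rw [dot_comm', dot_neg_tau g13])
      (dot_tau g2s) (dot_neg_tau g3s) (dot_tau g0s) (dot_neg_tau g1s)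
      (by rw [hm, dot_neg_tau g2t, neg_neg]) (by rw [hm, dot_tau g3t])
      (by rw [hm, dot_tau g0t]) (by rw [hm, dot_neg_tau g1t, neg_neg])
      c2 c3 c0 c1 (by rwa [hs]) (by rwa [ht]) (by
        rw [hs, ht, dot_neg_left, dot_neg_right, neg_neg, N0, N1, N2, N3, Ns, Nt]; linarith)
    have hdet : det3 v2 v3 v0 = det3 v0 v1 v2 := by
      rw [hv3]; simp only [det3, Pi.neg_apply, Pi.add_apply]; ring
    rw [hdet] at this
    linarith

/-! ### Reduction to an obtuse superbase -/

/-- The determinant of three integer vectors. -/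
def zdet (x y z : Fin 3 → ℤ) : ℤ :=
  x 0 * (y 1 * z 2 - y 2 * z 1) - x 1 * (y 0 * z 2 - y 2 * z 0) + x 2 * (y 0 * z 1 - y 1 * z 0)

/-- The vector of the lattice `latticeOf B` with coordinates `z`. -/
def latVec (B : Matrix (Fin 3) (Fin 3) ℝ) (z : Fin 3 → ℤ) : Fin 3 → ℝ :=
  B.mulVec fun i => (z i : ℝ)

lemma latVec_apply (B : Matrix (Fin 3) (Fin 3) ℝ) (z : Fin 3 → ℤ) (i : Fin 3) :
    latVec B z i = B i 0 * z 0 + B i 1 * z 1 + B i 2 * z 2 := by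
  simp [latVec, Matrix.mulVec, dotProduct, Fin.sum_univ_three]

lemma latVec_add (B : Matrix (Fin 3) (Fin 3) ℝ) (x y : Fin 3 → ℤ) :
    latVec B (x + y) = latVec B x + latVec B y := by
  funext i
  simp only [latVec_apply, Pi.add_apply]
  push_cast
  ring

lemma latVec_neg (B : Matrix (Fin 3) (Fin 3) ℝ) (x : Fin 3 → ℤ) :
    latVec B (-x) = -latVec B x := by
  funext i
  simp only [latVec_apply, Pi.neg_apply]
  push_cast
  ring

lemma latVec_zero (B : Matrix (Fin 3) (Fin 3) ℝ) : latVec B 0 = 0 := by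
  funext i
  simp [latVec_apply]

lemma det3_latVec (B : Matrix (Fin 3) (Fin 3) ℝ) (x y z : Fin 3 → ℤ) :
    det3 (latVec B x) (latVec B y) (latVec B z) = B.det * zdet x y z := by
  simp only [det3, latVec_apply, zdet, Matrix.det_fin_three]
  push_cast
  ring

lemma finite_short (B : Matrix (Fin 3) (Fin 3) ℝ) (hB : IsUnit B.det) (R : ℝ) :
    {z : Fin 3 → ℤ | dot (latVec B z) (latVec B z) ≤ R}.Finite := by
  obtain ⟨M, hM⟩ : ∃ M : ℝ, ∀ i j, |B⁻¹ i j| ≤ M := by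
    refine ⟨∑ i, ∑ j, |B⁻¹ i j|, fun i j => ?_⟩
    refine le_trans ?_ (Finset.single_le_sum (f := fun i => ∑ j, |B⁻¹ i j|)
      (fun i _ => Finset.sum_nonneg fun j _ => abs_nonneg _) (Finset.mem_univ i))
    exact Finset.single_le_sum (f := fun j => |B⁻¹ i j|) (fun j _ => abs_nonneg _)
      (Finset.mem_univ j)
  have hM0 : 0 ≤ M := (abs_nonneg _).trans (hM 0 0)
  obtain ⟨n, hn⟩ := exists_nat_ge (3 * M * (R + 1))
  refine (Set.finite_Icc (fun _ : Fin 3 => (-(n : ℤ))) (fun _ => (n : ℤ))).subset ?_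
  intro z hz
  have hz' : dot (latVec B z) (latVec B z) ≤ R := hz
  have hle : ∀ j, |latVec B z j| ≤ R + 1 := by
    intro j
    have h1 : |latVec B z j| ^ 2 ≤ R := by
      rw [sq_abs]
      refine le_trans ?_ hz'
      simp only [dot]
      have := sq_nonneg (latVec B z 0)
      have := sq_nonneg (latVec B z 1)
      have := sq_nonneg (latVec B z 2)
      fin_cases j <;> simp <;> nlinarith
    nlinarith [sq_nonneg (|latVec B z j| - 1), abs_nonneg (latVec B z j)]
  have key : ∀ i, |(z i : ℝ)| ≤ n := by
    intro i
    have e : (z i : ℝ) = B⁻¹ i 0 * latVec B z 0 + B⁻¹ i 1 * latVec B z 1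
        + B⁻¹ i 2 * latVec B z 2 := by
      have h : B⁻¹.mulVec (latVec B z) = fun i => (z i : ℝ) := by
        rw [latVec, Matrix.mulVec_mulVec, Matrix.nonsing_inv_mul _ hB, Matrix.one_mulVec]
      have := congrFun h i
      simp only [Matrix.mulVec, dotProduct, Fin.sum_univ_three] at this
      exact this.symm
    have t : ∀ j, |B⁻¹ i j * latVec B z j| ≤ M * (R + 1) := fun j => by
      rw [abs_mul]
      exact mul_le_mul (hM i j) (hle j) (abs_nonneg _) hM0
    rw [e]
    have := abs_add_three (B⁻¹ i 0 * latVec B z 0) (B⁻¹ i 1 * latVec B z 1)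
      (B⁻¹ i 2 * latVec B z 2)
    linarith [t 0, t 1, t 2]
  refine ⟨fun i => ?_, fun i => ?_⟩
  · have := neg_le_of_abs_le (key i)
    exact_mod_cast this
  · have := le_of_abs_le (key i)
    exact_mod_cast this

/-- Four integer vectors form a superbase of `ℤ³`: they sum to zero and three of them form a
basis. -/
structure IsSuperbase (z0 z1 z2 z3 : Fin 3 → ℤ) : Prop where
  sum : z0 + z1 + z2 + z3 = 0
  det : zdet z0 z1 z2 ^ 2 = 1

lemma IsSuperbase.eq3 {z0 z1 z2 z3 : Fin 3 → ℤ} (h : IsSuperbase z0 z1 z2 z3) :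
    z3 = -(z0 + z1 + z2) := by
  rw [eq_neg_iff_add_eq_zero, ← h.sum]; abel

lemma IsSuperbase.swap01 {z0 z1 z2 z3 : Fin 3 → ℤ} (h : IsSuperbase z0 z1 z2 z3) :
    IsSuperbase z1 z0 z2 z3 :=
  ⟨by rw [← h.sum]; abel, by rw [← h.det]; simp only [zdet]; ring⟩

lemma IsSuperbase.swap12 {z0 z1 z2 z3 : Fin 3 → ℤ} (h : IsSuperbase z0 z1 z2 z3) :
    IsSuperbase z0 z2 z1 z3 :=
  ⟨by rw [← h.sum]; abel, by rw [← h.det]; simp only [zdet]; ring⟩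

lemma IsSuperbase.swap23 {z0 z1 z2 z3 : Fin 3 → ℤ} (h : IsSuperbase z0 z1 z2 z3) :
    IsSuperbase z0 z1 z3 z2 :=
  ⟨by rw [← h.sum]; abel, by
    rw [← h.det, h.eq3]; simp only [zdet, Pi.neg_apply, Pi.add_apply]; ring⟩

lemma IsSuperbase.ne_zero {z0 z1 z2 z3 : Fin 3 → ℤ} (h : IsSuperbase z0 z1 z2 z3) : z0 ≠ 0 := by
  intro h0
  have := h.det
  rw [h0] at this
  simp [zdet] at this

lemma IsSuperbase.add_ne_zero {z0 z1 z2 z3 : Fin 3 → ℤ} (h : IsSuperbase z0 z1 z2 z3) :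
    z0 + z1 ≠ 0 := by
  intro h0
  have h1 : z1 = -z0 := by rw [eq_neg_iff_add_eq_zero, ← h0]; abel
  have := h.det
  rw [h1] at this
  have e : zdet z0 (-z0) z2 = 0 := by simp only [zdet, Pi.neg_apply]; ring
  rw [e] at this
  norm_num at this

/-- One step of Selling's reduction of the pair `z0, z1`. -/
lemma IsSuperbase.selling {z0 z1 z2 z3 : Fin 3 → ℤ} (h : IsSuperbase z0 z1 z2 z3) :
    IsSuperbase (-z0) z1 (z2 + z0) (z3 + z0) := by
  refine ⟨by rw [← h.sum]; abel, ?_⟩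
  rw [← h.det]
  simp only [zdet, Pi.neg_apply, Pi.add_apply]; ring

/-- The sum of the squared norms of the four lattice vectors of a superbase. -/
def sellingSum (B : Matrix (Fin 3) (Fin 3) ℝ) (z0 z1 z2 z3 : Fin 3 → ℤ) : ℝ :=
  dot (latVec B z0) (latVec B z0) + dot (latVec B z1) (latVec B z1)
    + dot (latVec B z2) (latVec B z2) + dot (latVec B z3) (latVec B z3)

lemma exists_min_superbase (B : Matrix (Fin 3) (Fin 3) ℝ) (hB : IsUnit B.det) :
    ∃ z0 z1 z2 z3, IsSuperbase z0 z1 z2 z3 ∧ ∀ y0 y1 y2 y3, IsSuperbase y0 y1 y2 y3 →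
      sellingSum B z0 z1 z2 z3 ≤ sellingSum B y0 y1 y2 y3 := by
  have hx : IsSuperbase ![1, 0, 0] ![0, 1, 0] ![0, 0, 1] ![-1, -1, -1] := by
    refine ⟨by decide, by decide⟩
  obtain ⟨R, hR⟩ : ∃ R, R = sellingSum B ![1, 0, 0] ![0, 1, 0] ![0, 0, 1] ![-1, -1, -1] := ⟨_, rfl⟩
  let S : Set ((Fin 3 → ℤ) × (Fin 3 → ℤ) × (Fin 3 → ℤ) × (Fin 3 → ℤ)) :=
    {p | IsSuperbase p.1 p.2.1 p.2.2.1 p.2.2.2 ∧ sellingSum B p.1 p.2.1 p.2.2.1 p.2.2.2 ≤ R}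
  have hfin : S.Finite := by
    have hs := finite_short B hB R
    refine (hs.prod (hs.prod (hs.prod hs))).subset ?_
    rintro ⟨y0, y1, y2, y3⟩ ⟨-, hp⟩
    simp only [sellingSum] at hp
    have := dot_self_nonneg (latVec B y0)
    have := dot_self_nonneg (latVec B y1)
    have := dot_self_nonneg (latVec B y2)
    have := dot_self_nonneg (latVec B y3)
    simp only [Set.mem_prod, Set.mem_ofPred_eq]
    refine ⟨?_, ?_, ?_, ?_⟩ <;> linarith
  obtain ⟨⟨z0, z1, z2, z3⟩, ⟨hz, hzR⟩, hmin⟩ := Set.exists_min_image S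
    (fun p => sellingSum B p.1 p.2.1 p.2.2.1 p.2.2.2) hfin ⟨(_, _, _, _), hx, hR.ge⟩
  refine ⟨z0, z1, z2, z3, hz, fun y0 y1 y2 y3 hy => ?_⟩
  by_cases hc : sellingSum B y0 y1 y2 y3 ≤ R
  · exact hmin (y0, y1, y2, y3) ⟨hy, hc⟩
  · exact le_trans hzR (not_le.1 hc).le

/-- A lattice all of whose nonzero vectors lie beyond some facet of `2(1 + τ)` times the
dodecahedron has determinant at least `16`. A superbase of least `sellingSum` is obtuse, because a
Selling step changes the sum by a multiple of an inner product. -/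
lemma det_bound (B : Matrix (Fin 3) (Fin 3) ℝ) (hB : IsUnit B.det)
    (hadm : ∀ z : Fin 3 → ℤ, z ≠ 0 → ∃ f, 2 * τ + 2 ≤ dot (ico f) (latVec B z)) :
    16 ≤ |B.det| := by
  obtain ⟨z0, z1, z2, z3, hz, hmin⟩ := exists_min_superbase B hB
  have obtuse : ∀ y0 y1 y2 y3, IsSuperbase y0 y1 y2 y3 →
      sellingSum B y0 y1 y2 y3 = sellingSum B z0 z1 z2 z3 →
      dot (latVec B y0) (latVec B y1) ≤ 0 := by
    intro y0 y1 y2 y3 hy e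
    have hm := hmin _ _ _ _ hy.selling
    rw [← e, hy.eq3] at hm
    simp only [sellingSum, latVec_add, latVec_neg, dot_add_left, dot_add_right, dot_neg_left,
      dot_neg_right, dot_comm' (latVec B y1) (latVec B y0), dot_comm' (latVec B y2) (latVec B y0),
      dot_comm' (latVec B y2) (latVec B y1)] at hm
    linarith
  have s02 := hz.swap12
  have s03 := hz.swap23.swap12
  have s12 := hz.swap01.swap12
  have s13 := hz.swap01.swap23.swap12
  have s23 := s02.swap01.swap23.swap12
  have p01 := obtuse _ _ _ _ hz rfl
  have p02 := obtuse _ _ _ _ s02 (by simp only [sellingSum]; ring)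
  have p03 := obtuse _ _ _ _ s03 (by simp only [sellingSum]; ring)
  have p12 := obtuse _ _ _ _ s12 (by simp only [sellingSum]; ring)
  have p13 := obtuse _ _ _ _ s13 (by simp only [sellingSum]; ring)
  have p23 := obtuse _ _ _ _ s23 (by simp only [sellingSum]; ring)
  obtain ⟨f0, c0⟩ := hadm _ hz.ne_zero
  obtain ⟨f1, c1⟩ := hadm _ s12.ne_zero
  obtain ⟨f2, c2⟩ := hadm _ s23.ne_zero
  obtain ⟨f3, c3⟩ := hadm _ s03.swap01.ne_zero
  obtain ⟨fr, cr⟩ := hadm _ hz.add_ne_zero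
  obtain ⟨fs, cs⟩ := hadm _ s02.add_ne_zero
  obtain ⟨ft, ct⟩ := hadm _ s03.add_ne_zero
  rw [latVec_add] at cr cs ct
  have hsum : ∀ {y0 y1 y2 y3}, IsSuperbase y0 y1 y2 y3 →
      latVec B y0 + latVec B y1 + latVec B y2 + latVec B y3 = 0 := fun h => by
    rw [← latVec_add, ← latVec_add, ← latVec_add, h.sum, latVec_zero]
  have fin : ∀ {y0 y1 y2 y3}, IsSuperbase y0 y1 y2 y3 →
      256 ≤ det3 (latVec B y0) (latVec B y1) (latVec B y2) ^ 2 → 16 ≤ |B.det| := by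
    intro y0 y1 y2 y3 h h'
    have e : ((zdet y0 y1 y2 : ℤ) : ℝ) ^ 2 = 1 := by exact_mod_cast h.det
    rw [det3_latVec, mul_pow, e, mul_one, ← sq_abs] at h'
    nlinarith [abs_nonneg B.det]
  have c10 := dot_comm' (latVec B z1) (latVec B z0)
  have c21 := dot_comm' (latVec B z2) (latVec B z1)
  have c31 := dot_comm' (latVec B z3) (latVec B z1)
  have c32 := dot_comm' (latVec B z3) (latVec B z2)
  -- the matching with the smallest total `-vᵢ·vⱼ` plays the role of `{01|23}` in `core`
  rcases le_total (dot (latVec B z0) (latVec B z1) + dot (latVec B z2) (latVec B z3))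
    (dot (latVec B z0) (latVec B z2) + dot (latVec B z1) (latVec B z3)) with a | a <;>
  rcases le_total (dot (latVec B z0) (latVec B z1) + dot (latVec B z2) (latVec B z3))
    (dot (latVec B z0) (latVec B z3) + dot (latVec B z1) (latVec B z2)) with b | b <;>
  rcases le_total (dot (latVec B z0) (latVec B z2) + dot (latVec B z1) (latVec B z3))
    (dot (latVec B z0) (latVec B z3) + dot (latVec B z1) (latVec B z2)) with c | c
  all_goals first
    | exact fin hz (core _ _ _ _ f0 f1 f2 f3 fs ft (hsum hz) p01 p02 p03 p12 p13 p23 c0 c1 c2 c3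
        cs ct (by linarith) (by linarith))
    | exact fin s02 (core _ _ _ _ f0 f2 f1 f3 fr ft (hsum s02) p02 p01 p03 (by linarith) p23 p13
        c0 c2 c1 c3 cr ct (by linarith) (by linarith))
    | exact fin s03 (core _ _ _ _ f0 f3 f1 f2 fr fs (hsum s03) p03 p01 p02 (by linarith)
        (by linarith) p12 c0 c3 c1 c2 cr cs (by linarith) (by linarith))

/-! ### Packings and admissible lattices -/

open Filter Topology in
/-- A linear functional that is at most `r` on `S` is strictly less than `r` on the interior. -/
lemma lt_of_mem_interior {S : Set (Fin 3 → ℝ)} {u p : Fin 3 → ℝ} {r : ℝ} (hu : 0 < dot u u)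
    (hS : ∀ x ∈ S, dot u x ≤ r) (hp : p ∈ interior S) : dot u p < r := by
  have hc : Continuous fun t : ℝ => p + t • u := by fun_prop
  have h0 : (fun t : ℝ => p + t • u) 0 ∈ interior S := by simpa using hp
  have hev : ∀ᶠ t in 𝓝[>] (0 : ℝ), p + t • u ∈ interior S :=
    (hc.tendsto 0).eventually (isOpen_interior.mem_nhds h0) |>.filter_mono nhdsWithin_le_nhds
  obtain ⟨t, ht, ht0⟩ := (hev.and self_mem_nhdsWithin).exists
  have h1 := hS _ (interior_subset ht)
  rw [dot_add_right, dot_smul_right] at h1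
  have := mul_pos (show 0 < t from ht0) hu
  linarith

/-- The dodecahedron scaled by `ρ` (for `ρ > 0`), cut out by its twelve facet inequalities. -/
def body (ρ : ℝ) : Set (Fin 3 → ℝ) := {x | ∀ f, dot (ico f) x ≤ ρ}

/-- The twelve facet functionals, written out. -/
lemma forall_facets (P : ℝ → Prop) (x : Fin 3 → ℝ) : (∀ f, P (dot (ico f) x)) ↔
    (P (τ * x 0 + x 1) ∧ P (τ * x 0 - x 1) ∧ P (-(τ * x 0) - x 1) ∧ P (-(τ * x 0) + x 1)) ∧
    (P (τ * x 1 + x 2) ∧ P (τ * x 1 - x 2) ∧ P (-(τ * x 1) - x 2) ∧ P (-(τ * x 1) + x 2)) ∧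
    (P (τ * x 2 + x 0) ∧ P (τ * x 2 - x 0) ∧ P (-(τ * x 2) - x 0) ∧ P (-(τ * x 2) + x 0)) := by
  have e0 : dot (ico 0) x = τ * x 0 + x 1 := by simp [dot, ico, icoA, icoB]
  have e1 : dot (ico 1) x = τ * x 0 - x 1 := by simp [dot, ico, icoA, icoB]; ring
  have e2 : dot (ico 2) x = τ * x 1 + x 2 := by simp [dot, ico, icoA, icoB]
  have e3 : dot (ico 3) x = τ * x 1 - x 2 := by simp [dot, ico, icoA, icoB]; ring
  have e4 : dot (ico 4) x = τ * x 2 + x 0 := by simp [dot, ico, icoA, icoB]; ring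
  have e5 : dot (ico 5) x = τ * x 2 - x 0 := by simp [dot, ico, icoA, icoB]; ring
  have e6 : dot (ico 6) x = -(τ * x 0) - x 1 := by simp [dot, ico, icoA, icoB]; ring
  have e7 : dot (ico 7) x = -(τ * x 0) + x 1 := by simp [dot, ico, icoA, icoB]
  have e8 : dot (ico 8) x = -(τ * x 1) - x 2 := by simp [dot, ico, icoA, icoB]; ring
  have e9 : dot (ico 9) x = -(τ * x 1) + x 2 := by simp [dot, ico, icoA, icoB]
  have e10 : dot (ico 10) x = -(τ * x 2) - x 0 := by simp [dot, ico, icoA, icoB]; ring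
  have e11 : dot (ico 11) x = -(τ * x 2) + x 0 := by simp [dot, ico, icoA, icoB]; ring
  rw [← e0, ← e1, ← e2, ← e3, ← e4, ← e5, ← e6, ← e7, ← e8, ← e9, ← e10, ← e11]
  refine ⟨fun h => ⟨⟨h _, h _, h _, h _⟩, ⟨h _, h _, h _, h _⟩, ⟨h _, h _, h _, h _⟩⟩, ?_⟩
  rintro ⟨⟨h0, h1, h6, h7⟩, ⟨h2, h3, h8, h9⟩, ⟨h4, h5, h10, h11⟩⟩ f
  fin_cases f <;> assumption

lemma facets_le (x : Fin 3 → ℝ) (ρ : ℝ) : (∀ f, dot (ico f) x ≤ ρ) ↔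
    |τ * x 0| + |x 1| ≤ ρ ∧ |τ * x 1| + |x 2| ≤ ρ ∧ |τ * x 2| + |x 0| ≤ ρ := by
  have key : ∀ a b : ℝ, |a| + |b| ≤ ρ ↔ a + b ≤ ρ ∧ a - b ≤ ρ ∧ -a - b ≤ ρ ∧ -a + b ≤ ρ := by
    intro a b
    constructor
    · intro h
      have := le_abs_self a
      have := neg_abs_le a
      have := le_abs_self b
      have := neg_abs_le b
      refine ⟨?_, ?_, ?_, ?_⟩ <;> linarith
    · rintro ⟨h1, h2, h3, h4⟩
      rcases abs_cases a with ⟨ha, -⟩ | ⟨ha, -⟩ <;> rcases abs_cases b with ⟨hb, -⟩ | ⟨hb, -⟩ <;>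
        rw [ha, hb] <;> linarith
  rw [key, key, key]
  exact forall_facets (· ≤ ρ) x

lemma facets_lt (x : Fin 3 → ℝ) (ρ : ℝ) (h : ∀ f, dot (ico f) x < ρ) :
    |τ * x 0| + |x 1| < ρ ∧ |τ * x 1| + |x 2| < ρ ∧ |τ * x 2| + |x 0| < ρ := by
  have key : ∀ a b : ℝ, a + b < ρ ∧ a - b < ρ ∧ -a - b < ρ ∧ -a + b < ρ → |a| + |b| < ρ := by
    rintro a b ⟨h1, h2, h3, h4⟩
    rcases abs_cases a with ⟨ha, -⟩ | ⟨ha, -⟩ <;> rcases abs_cases b with ⟨hb, -⟩ | ⟨hb, -⟩ <;>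
      rw [ha, hb] <;> linarith
  obtain ⟨h1, h2, h3⟩ := (forall_facets (· < ρ) x).1 h
  exact ⟨key _ _ h1, key _ _ h2, key _ _ h3⟩

lemma dodeca_eq_body : dodeca = body 1 := by
  ext x
  exact (facets_le x 1).symm

lemma smul_dodeca {r : ℝ} (hr : 0 < r) : r • dodeca = body r := by
  ext x
  rw [Set.mem_smul_set_iff_inv_smul_mem₀ hr.ne', dodeca_eq_body]
  refine forall_congr' fun f => ?_
  rw [dot_smul_right, inv_mul_le_iff₀ hr, mul_one]

lemma mem_latticeOf (B : Matrix (Fin 3) (Fin 3) ℝ) (z : Fin 3 → ℤ) : latVec B z ∈ latticeOf B :=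
  ⟨z, rfl⟩

lemma latVec_ne_zero (B : Matrix (Fin 3) (Fin 3) ℝ) (hB : IsUnit B.det) {z : Fin 3 → ℤ}
    (hz : z ≠ 0) : latVec B z ≠ 0 := by
  intro h
  apply hz
  have h1 : (fun i => (z i : ℝ)) = 0 := by
    have : B⁻¹.mulVec (latVec B z) = fun i => (z i : ℝ) := by
      rw [latVec, Matrix.mulVec_mulVec, Matrix.nonsing_inv_mul _ hB, Matrix.one_mulVec]
    rw [← this, h, Matrix.mulVec_zero]
  funext i
  have := congrFun h1 i
  simpa using this

/-- Nonzero vectors of a packing lattice of `body ρ` lie outside the interior of `body (2 * ρ)`: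
otherwise the midpoint of `0` and `latVec B z` is interior to both translates. -/
lemma admissible_of_packing {ρ : ℝ} (B : Matrix (Fin 3) (Fin 3) ℝ) (hB : IsUnit B.det)
    (hp : IsPackingLattice (body ρ) (latticeOf B)) (z : Fin 3 → ℤ) (hz : z ≠ 0) :
    ∃ f, 2 * ρ ≤ dot (ico f) (latVec B z) := by
  by_contra! hcon
  have hU : IsOpen {x : Fin 3 → ℝ | ∀ f, dot (ico f) x < ρ} := by
    simp only [Set.ofPred_forall]
    refine isOpen_iInter_of_finite fun f => isOpen_lt ?_ continuous_const
    unfold dot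
    fun_prop
  have hsub : ∀ x : Fin 3 → ℝ, (x + ·) '' {x | ∀ f, dot (ico f) x < ρ} ⊆
      interior ((x + ·) '' body ρ) := fun x =>
    interior_maximal (Set.image_mono fun y hy f => (hy f).le) (isOpenMap_add_left x _ hU)
  have hd := hp _ (mem_latticeOf B z) _ (mem_latticeOf B 0)
    (by rw [latVec_zero]; exact latVec_ne_zero B hB hz)
  refine Set.disjoint_left.1 hd (hsub _ (a := (1 / 2 : ℝ) • latVec B z) ?_) (hsub _ ?_)
  · refine ⟨-((1 / 2 : ℝ) • latVec B z), fun f => ?_, by module⟩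
    have := hcon (f + 6)
    rw [ico_neg, dot_neg_left] at this
    rw [dot_neg_right, dot_smul_right]
    linarith
  · refine ⟨(1 / 2 : ℝ) • latVec B z, fun f => ?_, by rw [latVec_zero]; simp⟩
    have := hcon f
    rw [dot_smul_right]
    linarith

/-- If the nonzero lattice vectors lie outside the interior of `body (2 * ρ)`, the separating facet
normal of the difference keeps the two translates apart. -/
lemma packing_of_admissible {ρ : ℝ} (B : Matrix (Fin 3) (Fin 3) ℝ)
    (h : ∀ z : Fin 3 → ℤ, z ≠ 0 → ∃ f, 2 * ρ ≤ dot (ico f) (latVec B z)) :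
    IsPackingLattice (body ρ) (latticeOf B) := by
  rintro x ⟨z, rfl⟩ y ⟨z', rfl⟩ hne
  change latVec B z ≠ latVec B z' at hne
  change Disjoint (interior ((latVec B z + ·) '' body ρ)) (interior ((latVec B z' + ·) '' body ρ))
  obtain ⟨f, hf⟩ := h (z + -z') (by
    intro h0
    exact hne (by rw [← sub_eq_add_neg, sub_eq_zero] at h0; rw [h0]))
  rw [latVec_add, latVec_neg, dot_add_right, dot_neg_right] at hf
  rw [Set.disjoint_left]
  intro p hp hp'
  have pos : ∀ g, 0 < dot (ico g) (ico g) := fun g => by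
    rw [ico_self]; linarith [tau_gt]
  have side : ∀ (w : Fin 3 → ℝ) (g : Fin 12), p ∈ interior ((w + ·) '' body ρ) →
      dot (ico g) p < dot (ico g) w + ρ := by
    intro w g hw
    refine lt_of_mem_interior (pos g) ?_ hw
    rintro _ ⟨q, hq, rfl⟩
    have := hq g
    rw [dot_add_right]
    linarith
  have h1 := side _ f hp'
  have h2 := side _ (f + 6) hp
  rw [ico_neg, dot_neg_left, dot_neg_left] at h2
  linarith

/-- In a nonzero vector of `2D₃` some coordinate has absolute value at least `4`, or two
coordinates have absolute value at least `2`. -/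
lemma fcc_admissible (z : Fin 3 → ℤ) (hz : z ≠ 0) :
    ∃ f, 2 * (1 + τ) ≤ dot (ico f) (latVec ((2 : ℝ) • D3) z) := by
  by_contra! hcon
  obtain ⟨h1, h2, h3⟩ := facets_lt _ _ hcon
  have t1 := tau_gt
  have x0 : latVec ((2 : ℝ) • D3) z 0 = 2 * ((z 0 + z 1 : ℤ) : ℝ) := by
    rw [latVec_apply]; simp [D3]; ring
  have x1 : latVec ((2 : ℝ) • D3) z 1 = 2 * ((z 0 + z 2 : ℤ) : ℝ) := by
    rw [latVec_apply]; simp [D3]; ring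
  have x2 : latVec ((2 : ℝ) • D3) z 2 = 2 * ((z 1 + z 2 : ℤ) : ℝ) := by
    rw [latVec_apply]; simp [D3]; ring
  have key : ∀ p q : ℤ, |τ * (2 * (p : ℝ))| + |2 * (q : ℝ)| < 2 * (1 + τ) →
      |p| ≤ 1 ∧ (|p| = 1 → q = 0) := by
    intro p q h
    rw [abs_mul, abs_mul, abs_mul, abs_of_pos (show 0 < τ by linarith), abs_two,
      ← Int.cast_abs, ← Int.cast_abs] at h
    have q0 : (0 : ℝ) ≤ ((|q| : ℤ) : ℝ) := by exact_mod_cast abs_nonneg q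
    constructor
    · by_contra! hp
      have : (2 : ℝ) ≤ ((|p| : ℤ) : ℝ) := by exact_mod_cast hp
      nlinarith
    · intro hp
      rw [hp] at h
      have : ((|q| : ℤ) : ℝ) < 1 := by push_cast at h ⊢; linarith
      have : |q| < 1 := by exact_mod_cast this
      exact Int.abs_lt_one_iff.1 this
  rw [x0, x1] at h1
  rw [x1, x2] at h2
  rw [x2, x0] at h3
  obtain ⟨a1, b1⟩ := key _ _ h1
  obtain ⟨a2, b2⟩ := key _ _ h2
  obtain ⟨a3, b3⟩ := key _ _ h3
  apply hz
  have e : z 0 = 0 ∧ z 1 = 0 ∧ z 2 = 0 := by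
    rw [abs_le] at a1 a2 a3
    have c1 : z 0 + z 1 = 0 ∨ z 0 + z 2 = 0 := by
      rcases eq_or_ne (z 0 + z 1) 0 with h | h
      · exact Or.inl h
      · right; apply b1; rcases abs_cases (z 0 + z 1) with h' | h' <;> omega
    have c2 : z 0 + z 2 = 0 ∨ z 1 + z 2 = 0 := by
      rcases eq_or_ne (z 0 + z 2) 0 with h | h
      · exact Or.inl h
      · right; apply b2; rcases abs_cases (z 0 + z 2) with h' | h' <;> omega
    have c3 : z 1 + z 2 = 0 ∨ z 0 + z 1 = 0 := by
      rcases eq_or_ne (z 1 + z 2) 0 with h | h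
      · exact Or.inl h
      · right; apply b3; rcases abs_cases (z 1 + z 2) with h' | h' <;> omega
    omega
  funext i
  fin_cases i
  exacts [e.1, e.2.1, e.2.2]

/-! ### The volume of the dodecahedron -/

/-- Volume, by slices orthogonal to the `i`-th axis, of a pair of opposite regions whose slice at
height `t` with `1 < |t| ≤ τ` is a rectangle with half-sides `p |t|` and `q |t|`. -/
lemma roof_volume (i : Fin 3) (p q : ℝ → ℝ) (hp : Continuous p) (hq : Continuous q)
    (hp0 : ∀ t ∈ Set.Ioc 1 τ, 0 ≤ p t) (hq0 : ∀ t ∈ Set.Ioc 1 τ, 0 ≤ q t) :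
    (volume {x : Fin 3 → ℝ | |x i| ∈ Set.Ioc 1 τ ∧ |x (i.succAbove 0)| ≤ p |x i| ∧
      |x (i.succAbove 1)| ≤ q |x i|}).toReal = 2 * ∫ t in (1 : ℝ)..τ, (2 * p t) * (2 * q t) := by
  have t1 := tau_gt
  set S : Set (ℝ × (Fin 2 → ℝ)) := {y | |y.1| ∈ Set.Ioc 1 τ ∧ |y.2 0| ≤ p |y.1| ∧
    |y.2 1| ≤ q |y.1|} with hS
  have hmS : MeasurableSet S := by
    have m1 : MeasurableSet {y : ℝ × (Fin 2 → ℝ) | |y.1| ∈ Set.Ioc 1 τ} :=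
      measurableSet_Ioc.preimage
        (by fun_prop : Continuous fun y : ℝ × (Fin 2 → ℝ) => |y.1|).measurable
    have m2 : MeasurableSet {y : ℝ × (Fin 2 → ℝ) | |y.2 0| ≤ p |y.1|} :=
      (isClosed_le (by fun_prop) (by fun_prop)).measurableSet
    have m3 : MeasurableSet {y : ℝ × (Fin 2 → ℝ) | |y.2 1| ≤ q |y.1|} :=
      (isClosed_le (by fun_prop) (by fun_prop)).measurableSet
    exact m1.inter (m2.inter m3)
  have e1 := (volume_preserving_piFinSuccAbove (fun _ : Fin 3 => ℝ) i).measure_preimage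
    hmS.nullMeasurableSet
  have e2 : (MeasurableEquiv.piFinSuccAbove (fun _ : Fin 3 => ℝ) i) ⁻¹' S =
      {x : Fin 3 → ℝ | |x i| ∈ Set.Ioc 1 τ ∧ |x (i.succAbove 0)| ≤ p |x i| ∧
      |x (i.succAbove 1)| ≤ q |x i|} := by
    ext x
    rfl
  set g : ℝ → ℝ := (Set.Ioc 1 τ).indicator fun t => (2 * p t) * (2 * q t) with hg
  have hgm : Measurable g := by
    refine Measurable.indicator ?_ measurableSet_Ioc
    exact (by fun_prop : Continuous fun t => (2 * p t) * (2 * q t)).measurable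
  have hslice : ∀ z : ℝ, volume (Prod.mk z ⁻¹' S) = ENNReal.ofReal (g |z|) := by
    intro z
    by_cases hz : |z| ∈ Set.Ioc 1 τ
    · have : Prod.mk z ⁻¹' S = Set.Icc ![-p |z|, -q |z|] ![p |z|, q |z|] := by
        ext y
        simp only [hS, Set.mem_preimage, Set.mem_ofPred_eq, hz, true_and, Set.mem_Icc, Pi.le_def,
          Fin.forall_fin_two, abs_le]
        simp
        tauto
      rw [this, Real.volume_Icc_pi, hg, Set.indicator_of_mem hz, Fin.prod_univ_two,
        ENNReal.ofReal_mul (by linarith [hp0 _ hz])]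
      congr 2 <;> simp <;> ring
    · have : Prod.mk z ⁻¹' S = ∅ := by
        ext y
        simp only [hS, Set.mem_preimage, Set.mem_ofPred_eq, hz, false_and, Set.mem_empty_iff_false]
      rw [this, hg, Set.indicator_of_notMem hz]
      simp
  rw [← e2, e1, Measure.volume_eq_prod, Measure.prod_apply hmS]
  simp_rw [hslice]
  rw [← integral_eq_lintegral_of_nonneg_ae, integral_comp_abs (f := g)]
  · rw [intervalIntegral.integral_of_le (by linarith), hg, setIntegral_indicator measurableSet_Ioc]
    congr 3
    ext t
    simp only [Set.mem_inter_iff, Set.mem_Ioi, Set.mem_Ioc]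
    constructor
    · exact fun h => h.2
    · exact fun h => ⟨by linarith [h.1], h⟩
  · refine Filter.Eventually.of_forall fun z => Set.indicator_nonneg (fun t ht => ?_) _
    have := hp0 t ht
    have := hq0 t ht
    positivity
  · exact (hgm.comp measurable_id.abs).aestronglyMeasurable

lemma roof_integral : ∫ t in (1 : ℝ)..τ, (2 * (τ + 1 - τ * t)) * (2 * (τ - (τ - 1) * t)) =
    2 * τ / 3 := by
  have h := tau_sq
  have e : ∀ t : ℝ, (2 * (τ + 1 - τ * t)) * (2 * (τ - (τ - 1) * t)) =
      (4 * (2 * τ + 1)) * 1 - (4 * (2 * τ + 1)) * t + 4 * t ^ 2 := by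
    intro t
    linear_combination (4 * t ^ 2 - 8 * t + 4) * h
  simp_rw [e]
  rw [intervalIntegral.integral_add, intervalIntegral.integral_sub,
    intervalIntegral.integral_const_mul, intervalIntegral.integral_const_mul,
    intervalIntegral.integral_const_mul, integral_id, integral_pow]
  · simp only [intervalIntegral.integral_const, smul_eq_mul]
    norm_num
    have h3 : τ ^ 3 = 2 * τ + 1 := by linear_combination (τ + 1) * h
    rw [h3, pow_two, h]
    linear_combination 4 * h
  all_goals exact Continuous.intervalIntegrable (by fun_prop) _ _

lemma roof_a (t : ℝ) (ht : t ∈ Set.Ioc 1 τ) : 0 ≤ τ + 1 - τ * t := by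
  nlinarith [tau_sq, tau_gt, ht.2]

lemma roof_b (t : ℝ) (ht : t ∈ Set.Ioc 1 τ) : 0 ≤ τ - (τ - 1) * t := by
  nlinarith [tau_sq, tau_gt, ht.2]

lemma mem_body_iff (x : Fin 3 → ℝ) : x ∈ body (1 + τ) ↔ τ * |x 0| + |x 1| ≤ 1 + τ ∧
    τ * |x 1| + |x 2| ≤ 1 + τ ∧ τ * |x 2| + |x 0| ≤ 1 + τ := by
  have t0 : |τ| = τ := abs_of_pos (by linarith [tau_gt])
  have := facets_le x (1 + τ)
  simp only [abs_mul, t0] at this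
  exact this

/-- Above height `1` the slice of the dodecahedron is a rectangle: the constraint on the pair
`a, b` is implied by the other two. -/
lemma roof_iff {a b c : ℝ} (ha : 0 ≤ a) (hb : 0 ≤ b) (hc : 1 < c) :
    (τ * a + b ≤ 1 + τ ∧ τ * b + c ≤ 1 + τ ∧ τ * c + a ≤ 1 + τ) ↔
      c ≤ τ ∧ a ≤ τ + 1 - τ * c ∧ b ≤ τ - (τ - 1) * c := by
  have h := tau_sq
  have t1 := tau_gt
  constructor
  · rintro ⟨-, h2, h3⟩
    refine ⟨by nlinarith, by linarith, ?_⟩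
    nlinarith
  · rintro ⟨h1, h2, h3⟩
    refine ⟨?_, ?_, by linarith⟩
    · nlinarith
    · nlinarith

/-- The dodecahedron `body (1 + τ)` is the cube `[-1, 1]³` with three pairs of opposite roofs on
its faces, each pair of volume `4τ/3`. -/
lemma volume_body : (volume (body (1 + τ))).toReal = 4 * (2 + τ) := by
  have h := tau_sq
  have t1 := tau_gt
  set Q : Set (Fin 3 → ℝ) := Set.Icc (fun _ => -1) (fun _ => 1) with hQ
  set R : Fin 3 → Set (Fin 3 → ℝ) := fun i => {x | x ∈ body (1 + τ) ∧ 1 < |x i|} with hR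
  have hclosed : IsClosed (body (1 + τ)) := by
    unfold body
    simp only [Set.ofPred_forall]
    refine isClosed_iInter fun f => isClosed_le ?_ continuous_const
    unfold dot
    fun_prop
  have hRm : ∀ i, MeasurableSet (R i) := fun i =>
    hclosed.measurableSet.inter (isOpen_lt continuous_const (continuous_apply i).abs).measurableSet
  have hmQ : ∀ x, x ∈ Q ↔ ∀ i, |x i| ≤ 1 := by
    intro x
    simp only [hQ, Set.mem_Icc, Pi.le_def, abs_le, forall_and]
  have hQsub : Q ⊆ body (1 + τ) := by
    intro x hx
    rw [hmQ] at hx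
    rw [mem_body_iff]
    refine ⟨?_, ?_, ?_⟩ <;> nlinarith [hx 0, hx 1, hx 2]
  have hlt : ∀ {a b c : ℝ}, 0 ≤ a → 0 ≤ b → τ * a + b ≤ 1 + τ → τ * b + c ≤ 1 + τ →
      τ * c + a ≤ 1 + τ → 1 < c → a < 1 ∧ b < 1 := by
    intro a b c ha hb h1 h2 h3 hc
    constructor <;> nlinarith
  have hR0 : ∀ x ∈ R 0, |x 1| < 1 ∧ |x 2| < 1 := by
    rintro x ⟨hx, hc⟩
    rw [mem_body_iff] at hx
    exact hlt (abs_nonneg _) (abs_nonneg _) hx.2.1 hx.2.2 hx.1 hc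
  have hR1 : ∀ x ∈ R 1, |x 2| < 1 ∧ |x 0| < 1 := by
    rintro x ⟨hx, hc⟩
    rw [mem_body_iff] at hx
    exact hlt (abs_nonneg _) (abs_nonneg _) hx.2.2 hx.1 hx.2.1 hc
  have hunion : body (1 + τ) = Q ∪ R 0 ∪ R 1 ∪ R 2 := by
    ext x
    constructor
    · intro hx
      by_cases c0 : 1 < |x 0|
      · exact Or.inl (Or.inl (Or.inr ⟨hx, c0⟩))
      by_cases c1 : 1 < |x 1|
      · exact Or.inl (Or.inr ⟨hx, c1⟩)
      by_cases c2 : 1 < |x 2|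
      · exact Or.inr ⟨hx, c2⟩
      refine Or.inl (Or.inl (Or.inl ((hmQ x).2 fun i => ?_)))
      fin_cases i
      exacts [not_lt.1 c0, not_lt.1 c1, not_lt.1 c2]
    · rintro (((hx | hx) | hx) | hx)
      exacts [hQsub hx, hx.1, hx.1, hx.1]
  have hQR : ∀ i, Disjoint Q (R i) := fun i => Set.disjoint_left.2 fun x hx hx' =>
    absurd ((hmQ x).1 hx i) (not_le.2 hx'.2)
  have d01 : Disjoint (R 0) (R 1) := Set.disjoint_left.2 fun x hx hx' =>
    absurd (hR0 x hx).1 (not_lt.2 hx'.2.le)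
  have d02 : Disjoint (R 0) (R 2) := Set.disjoint_left.2 fun x hx hx' =>
    absurd (hR0 x hx).2 (not_lt.2 hx'.2.le)
  have d12 : Disjoint (R 1) (R 2) := Set.disjoint_left.2 fun x hx hx' =>
    absurd (hR1 x hx).1 (not_lt.2 hx'.2.le)
  have hsumm : volume (body (1 + τ)) = volume Q + volume (R 0) + volume (R 1) + volume (R 2) := by
    rw [hunion, measure_union (by simp [hQR, d02, d12]) (hRm 2),
      measure_union (by simp [hQR, d01]) (hRm 1), measure_union (hQR 0) (hRm 0)]
  have hbdd : volume (body (1 + τ)) ≠ ⊤ := by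
    have : body (1 + τ) ⊆ Set.Icc (fun _ => -(1 + τ)) (fun _ => 1 + τ) := by
      intro x hx
      rw [mem_body_iff] at hx
      have a0 := abs_nonneg (x 0)
      have a1 := abs_nonneg (x 1)
      have a2 := abs_nonneg (x 2)
      have : ∀ i, |x i| ≤ 1 + τ := by
        intro i
        fin_cases i <;> simp <;> nlinarith
      exact ⟨fun i => (abs_le.1 (this i)).1, fun i => (abs_le.1 (this i)).2⟩
    exact ne_top_of_le_ne_top isCompact_Icc.measure_lt_top.ne (measure_mono this)
  have hfin : ∀ s ⊆ body (1 + τ), volume s ≠ ⊤ := fun s hs =>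
    ne_top_of_le_ne_top hbdd (measure_mono hs)
  have vQ : (volume Q).toReal = 8 := by
    rw [hQ, Real.volume_Icc_pi]
    simp
    norm_num
  have v0 : (volume (R 0)).toReal = 2 * (2 * τ / 3) := by
    rw [← roof_integral, ← roof_volume 0 _ _ (by fun_prop) (by fun_prop) roof_a roof_b]
    congr 2
    ext x
    have e0 : (0 : Fin 3).succAbove 0 = 1 := by decide
    have e1 : (0 : Fin 3).succAbove 1 = 2 := by decide
    simp only [hR, Set.mem_ofPred_eq, mem_body_iff, e0, e1, Set.mem_Ioc]
    have := fun hc => roof_iff (abs_nonneg (x 1)) (abs_nonneg (x 2)) (c := |x 0|) hc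
    tauto
  have v1 : (volume (R 1)).toReal = 2 * (2 * τ / 3) := by
    have := roof_volume 1 _ _ (by fun_prop) (by fun_prop) roof_b roof_a
    simp_rw [mul_comm (2 * (τ - (τ - 1) * _))] at this
    rw [← roof_integral, ← this]
    congr 2
    ext x
    have e0 : (1 : Fin 3).succAbove 0 = 0 := by decide
    have e1 : (1 : Fin 3).succAbove 1 = 2 := by decide
    simp only [hR, Set.mem_ofPred_eq, mem_body_iff, e0, e1, Set.mem_Ioc]
    have := fun hc => roof_iff (abs_nonneg (x 2)) (abs_nonneg (x 0)) (c := |x 1|) hc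
    tauto
  have v2 : (volume (R 2)).toReal = 2 * (2 * τ / 3) := by
    rw [← roof_integral, ← roof_volume 2 _ _ (by fun_prop) (by fun_prop) roof_a roof_b]
    congr 2
    ext x
    have e0 : (2 : Fin 3).succAbove 0 = 0 := by decide
    have e1 : (2 : Fin 3).succAbove 1 = 1 := by decide
    simp only [hR, Set.mem_ofPred_eq, mem_body_iff, e0, e1, Set.mem_Ioc]
    have := fun hc => roof_iff (abs_nonneg (x 0)) (abs_nonneg (x 1)) (c := |x 2|) hc
    tauto
  have fQ := hfin Q hQsub
  have f0 := hfin (R 0) fun x hx => hx.1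
  have f1 := hfin (R 1) fun x hx => hx.1
  have f2 := hfin (R 2) fun x hx => hx.1
  rw [hsumm, ENNReal.toReal_add (by simp [fQ, f0, f1]) f2,
    ENNReal.toReal_add (by simp [fQ, f0]) f1, ENNReal.toReal_add fQ f0, vQ, v0, v1, v2]
  ring

/-! ### The density -/

lemma det_two_D3 : |((2 : ℝ) • D3).det| = 16 := by
  rw [Matrix.det_smul, Matrix.det_fin_three]
  simp [D3]
  norm_num

lemma isUnit_smul_det {c : ℝ} (hc : c ≠ 0) {B : Matrix (Fin 3) (Fin 3) ℝ} (hB : IsUnit B.det) :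
    IsUnit (c • B).det := by
  rw [Matrix.det_smul]
  exact ((isUnit_iff_ne_zero.2 hc).pow _).mul hB

lemma abs_det_smul {c : ℝ} (hc : 0 < c) (B : Matrix (Fin 3) (Fin 3) ℝ) :
    |(c • B).det| = c ^ 3 * |B.det| := by
  rw [Matrix.det_smul, abs_mul, abs_of_pos (by positivity), Fintype.card_fin]

lemma latVec_smul (c : ℝ) (B : Matrix (Fin 3) (Fin 3) ℝ) (z : Fin 3 → ℤ) :
    latVec (c • B) z = c • latVec B z := by
  simp only [latVec, Matrix.smul_mulVec]

lemma isUnit_det_two_D3 : IsUnit ((2 : ℝ) • D3).det := by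
  rw [isUnit_iff_ne_zero, ← abs_ne_zero, det_two_D3]
  norm_num

/-- The volume of the unscaled dodecahedron, in the form in which it is used. -/
lemma volume_dodeca : (1 + τ) ^ 3 * (volume dodeca).toReal = 4 * (2 + τ) := by
  have t0 : 0 < 1 + τ := by linarith [tau_gt]
  rw [← volume_body, ← smul_dodeca t0, Measure.addHaar_smul, ENNReal.toReal_mul,
    ENNReal.toReal_ofReal (abs_nonneg _), abs_of_pos (by positivity)]
  simp

/-- The lattice packing density of the regular dodecahedron is `(2 + τ)/4`, and
`2D₃` is a densest packing lattice of the scaled copy `(1 + τ)·P_d`. -/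
theorem stmt_15 :
    packDensity dodeca = (2 + τ) / 4 ∧
    IsUnit ((2 : ℝ) • D3).det ∧
    IsPackingLattice ((1 + τ) • dodeca) (latticeOf ((2 : ℝ) • D3)) ∧
    (volume ((1 + τ) • dodeca)).toReal / |((2 : ℝ) • D3).det| = (2 + τ) / 4 ∧
    (∀ B : Matrix (Fin 3) (Fin 3) ℝ, IsUnit B.det →
      IsPackingLattice ((1 + τ) • dodeca) (latticeOf B) →
      (volume ((1 + τ) • dodeca)).toReal / |B.det| ≤ (2 + τ) / 4) := by
  have t0 : 0 < 1 + τ := by linarith [tau_gt]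
  have hpack : IsPackingLattice (body (1 + τ)) (latticeOf ((2 : ℝ) • D3)) :=
    packing_of_admissible _ fcc_admissible
  have hbound : ∀ B : Matrix (Fin 3) (Fin 3) ℝ, IsUnit B.det →
      IsPackingLattice (body (1 + τ)) (latticeOf B) → 16 ≤ |B.det| := by
    intro B hB hp
    refine det_bound B hB fun z hz => ?_
    obtain ⟨f, hf⟩ := admissible_of_packing B hB hp z hz
    exact ⟨f, by linarith⟩
  have hV := volume_dodeca
  rw [smul_dodeca t0, volume_body]
  refine ⟨?_, isUnit_det_two_D3, hpack, by rw [det_two_D3]; ring, fun B hB hp => ?_⟩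
  · refine IsGreatest.csSup_eq ⟨⟨(1 + τ)⁻¹ • ((2 : ℝ) • D3),
      isUnit_smul_det (inv_pos.2 t0).ne' isUnit_det_two_D3, ?_, ?_⟩, ?_⟩
    · rw [dodeca_eq_body]
      refine packing_of_admissible _ fun z hz => ?_
      obtain ⟨f, hf⟩ := fcc_admissible z hz
      refine ⟨f, ?_⟩
      rw [latVec_smul, dot_smul_right, le_inv_mul_iff₀ t0]
      linarith
    · rw [abs_det_smul (inv_pos.2 t0), det_two_D3, eq_div_iff (by positivity), inv_pow]
      field_simp
      linarith
    · rintro r ⟨B, hB, hp, rfl⟩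
      have hB' := isUnit_smul_det t0.ne' hB
      have h16 : 16 ≤ (1 + τ) ^ 3 * |B.det| := by
        rw [← abs_det_smul t0]
        refine det_bound _ hB' fun z hz => ?_
        rw [dodeca_eq_body] at hp
        obtain ⟨f, hf⟩ := admissible_of_packing B hB hp z hz
        refine ⟨f, ?_⟩
        rw [latVec_smul, dot_smul_right]
        nlinarith
      have hd : 0 < |B.det| := abs_pos.2 hB.ne_zero
      rw [div_le_iff₀ hd]
      refine le_of_mul_le_mul_left ?_ (show 0 < (1 + τ) ^ 3 by positivity)
      rw [hV]
      nlinarith [mul_le_mul_of_nonneg_left h16 (show 0 ≤ 2 + τ by linarith)]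
  · have h16 := hbound B hB hp
    rw [div_le_iff₀ (by linarith)]
    nlinarith [mul_le_mul_of_nonneg_left h16 (show 0 ≤ 2 + τ by linarith)]
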